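/- arXiv:1603.04462 — 4 statements merged into one kernel-verified Lean document; each statement's English description precedes it below -/
import Mathlib

section
/- For every 0 < γ < 1/4 there exists n₀ such that for every 3-uniform hypergraph H=(V,E) on n > n₀ vertices with δ₁(H) ≥ (1/4 + γ)·C(n,2) there is a set R ⊆ V of size at most γn with the following property: for every system (a_i,b_i)_{i∈[k]} of k ≤ γ³n/12 mutually disjoint pairs of distinct vertices of V there is a set of triples connecting (a_i,b_i)_{i∈[k]} which contains vertices from R only. -/
open Finset

/-- The triples `(x i, y i, z i)` connect the mutually disjoint pairs `(a i, b i)`: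
all `5m` vertices involved are distinct and `{a i, x i, y i}` and `{y i, z i, b i}`
are edges of `H` for every `i`. -/
def Connects {V : Type} [DecidableEq V] (H : Finset (Finset V)) (m : ℕ)
    (a b x y z : Fin m → V) : Prop :=
  Function.Injective (fun p : Fin m × Fin 5 => ![a p.1, b p.1, x p.1, y p.1, z p.1] p.2) ∧
  ∀ i : Fin m, ({a i, x i, y i} : Finset V) ∈ H ∧ ({y i, z i, b i} : Finset V) ∈ H

namespace Reservoir

lemma expect {V : Type} [Fintype V] [DecidableEq V] (p q : ℝ) (S : Finset V) :
    ∑ R ∈ (univ : Finset V).powerset, (p ^ R.card * (1 - p) ^ (univ \ R).card) * q ^ (R ∩ S).card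
      = (1 - p + p * q) ^ S.card := by
  have h := Finset.prod_add (fun v : V => p * (if v ∈ S then q else 1)) (fun _ => 1 - p) univ
  have e : ∀ R : Finset V, (∏ v ∈ R, p * (if v ∈ S then q else 1)) = p ^ R.card * q ^ (R ∩ S).card := by
    intro R
    rw [Finset.prod_mul_distrib, Finset.prod_const, Finset.prod_ite_mem, Finset.prod_const]
  have l : ∏ v : V, (p * (if v ∈ S then q else 1) + (1 - p)) = (1 - p + p * q) ^ S.card := by
    have : ∀ v : V, (p * (if v ∈ S then q else 1) + (1 - p)) = if v ∈ S then (1 - p + p * q) else 1 := by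
      intro v; split_ifs <;> ring
    rw [Finset.prod_congr rfl (fun v _ => this v), Finset.prod_ite_mem, Finset.prod_const]
    simp
  rw [← l, h]
  refine Finset.sum_congr rfl fun R _ => ?_
  rw [e, Finset.prod_const]; ring

lemma sampling (γ : ℝ) (hγ0 : 0 < γ) (hγ1 : γ < 1 / 4) :
    ∃ n₀ : ℕ, ∀ (V : Type) [Fintype V] [DecidableEq V], ∀ (F : Finset (Finset V)) (n : ℕ),
      Fintype.card V = n → n₀ < n → (F.card : ℝ) ≤ 2 * (n : ℝ) ^ 2 →
      (∀ S ∈ F, γ * n / 2 ≤ (S.card : ℝ)) →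
      ∃ R : Finset V, (R.card : ℝ) ≤ γ * n ∧ ∀ S ∈ F, 5 * γ ^ 2 * n / 48 ≤ ((R ∩ S).card : ℝ) := by
  have l1 : Real.log 2 < 0.70 := by linarith [Real.log_two_lt_d9]
  have l2 : (0.69 : ℝ) < Real.log 2 := by linarith [Real.log_two_gt_d9]
  set r := Real.exp (-(γ ^ 2 / 24)) with hr
  have hr0 : 0 < r := Real.exp_pos _
  have hr1 : r < 1 := by rw [hr, Real.exp_lt_one_iff]; nlinarith [pow_pos hγ0 2]
  have T1 := tendsto_pow_const_mul_const_pow_of_abs_lt_one 2 (r := r) (by rwa [abs_of_pos hr0])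
  have T0 := tendsto_pow_const_mul_const_pow_of_abs_lt_one 0 (r := r) (by rwa [abs_of_pos hr0])
  have T := (T1.const_mul 2).add T0
  simp only [pow_zero, one_mul, mul_zero, add_zero] at T
  obtain ⟨n₀, hn₀⟩ := Filter.eventually_atTop.1 (T.eventually (gt_mem_nhds (zero_lt_one)))
  refine ⟨n₀, ?_⟩
  intro V _ _ F n hV hn hF hS
  have hlt := hn₀ n hn.le
  have hnn : (0:ℝ) ≤ n := Nat.cast_nonneg n
  have hrn : r ^ n = Real.exp (-(γ ^ 2 / 24) * n) := by
    rw [hr, ← Real.exp_nat_mul]; ring_nf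
  set p := γ / 2 with hp
  have hp0 : 0 < p := by positivity
  have hp1 : p < 1 := by rw [hp]; linarith
  set w : Finset V → ℝ := fun R => p ^ R.card * (1 - p) ^ (univ \ R).card with hw
  have hwpos : ∀ R, 0 < w R := fun R => mul_pos (pow_pos hp0 _) (pow_pos (by linarith) _)
  have hw1 : ∑ R ∈ (univ : Finset V).powerset, w R = 1 := by
    have := expect p 1 (∅ : Finset V); simpa using this
  set Φ : Finset V → ℝ := fun R =>
    (∑ S ∈ F, Real.exp (Real.log 2 * (5 * γ ^ 2 * n / 48)) * (1 / 2) ^ (R ∩ S).card)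
      + Real.exp (-(Real.log 2 * (γ * n))) * 2 ^ R.card with hΦ
  have hE : ∑ R ∈ (univ : Finset V).powerset, w R * Φ R < 1 := by
    have e1 : ∑ R ∈ (univ : Finset V).powerset, w R * Φ R =
      (∑ S ∈ F, Real.exp (Real.log 2 * (5 * γ ^ 2 * n / 48)) * (1 - p + p * (1/2)) ^ S.card)
      + Real.exp (-(Real.log 2 * (γ * n))) * (1 - p + p * 2) ^ n := by
      have x2 := expect p 2 (univ : Finset V)
      simp only [Finset.inter_univ, Finset.card_univ, hV] at x2
      rw [← x2, Finset.mul_sum]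
      simp_rw [← expect p (1/2), Finset.mul_sum]
      rw [Finset.sum_comm, ← Finset.sum_add_distrib]
      refine Finset.sum_congr rfl fun R _ => ?_
      simp only [hΦ, hw, mul_add, Finset.mul_sum]
      congr 1
      · exact Finset.sum_congr rfl fun S _ => by ring
      · ring
    rw [e1]
    have b1 : ∀ S ∈ F, Real.exp (Real.log 2 * (5 * γ ^ 2 * n / 48)) * (1 - p + p * (1/2)) ^ S.card ≤ r ^ n := by
      intro S hSF
      have : (1 - p + p * (1/2)) ^ S.card ≤ Real.exp (-(p/2) * S.card) := by
        rw [mul_comm (-(p/2)), Real.exp_nat_mul]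
        refine pow_le_pow_left₀ (by linarith) ?_ _
        have := Real.add_one_le_exp (-(p/2)); linarith
      refine (mul_le_mul_of_nonneg_left this (Real.exp_pos _).le).trans ?_
      rw [← Real.exp_add, hrn, Real.exp_le_exp]
      have h1 := mul_le_mul_of_nonneg_left (hS S hSF) hp0.le
      have h2 : Real.log 2 * (5 * γ ^ 2 * n / 48) ≤ 0.70 * (5 * γ ^ 2 * n / 48) :=
        mul_le_mul_of_nonneg_right l1.le (by positivity)
      have h3 : 0 ≤ γ ^ 2 * n := by positivity
      rw [hp] at *
      nlinarith
    have b2 : Real.exp (-(Real.log 2 * (γ * n))) * (1 - p + p * 2) ^ n ≤ r ^ n := by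
      have : (1 - p + p * 2) ^ n ≤ Real.exp (p * n) := by
        rw [mul_comm p (n:ℝ), Real.exp_nat_mul]
        refine pow_le_pow_left₀ (by linarith) ?_ _
        have := Real.add_one_le_exp p; linarith
      refine (mul_le_mul_of_nonneg_left this (Real.exp_pos _).le).trans ?_
      rw [← Real.exp_add, hrn, Real.exp_le_exp]
      have h2 : 0.69 * (γ * n) ≤ Real.log 2 * (γ * n) :=
        mul_le_mul_of_nonneg_right l2.le (by positivity)
      have h3 : 0 ≤ γ * n := by positivity
      have h4 : γ ^ 2 * n ≤ γ * n := by nlinarith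
      rw [hp] at *
      nlinarith
    have b3 := Finset.sum_le_sum b1
    rw [Finset.sum_const, nsmul_eq_mul] at b3
    have b4 := mul_le_mul_of_nonneg_right hF (pow_pos hr0 n).le
    linarith
  obtain ⟨R, -, hR⟩ : ∃ R ∈ (univ : Finset V).powerset, Φ R < 1 := by
    by_contra! hcon
    have : ∑ R ∈ (univ : Finset V).powerset, w R ≤ ∑ R ∈ (univ : Finset V).powerset, w R * Φ R :=
      Finset.sum_le_sum fun R hR => by nlinarith [hcon R hR, hwpos R]
    linarith
  have t0 : ∀ S ∈ F, 0 ≤ Real.exp (Real.log 2 * (5 * γ ^ 2 * n / 48)) * (1 / 2) ^ (R ∩ S).card :=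
    fun S _ => by positivity
  have t1 : 0 ≤ Real.exp (-(Real.log 2 * (γ * n))) * 2 ^ R.card := by positivity
  have p2 : ∀ m : ℕ, (2:ℝ) ^ m = Real.exp (Real.log 2 * m) := by
    intro m; rw [mul_comm, Real.exp_nat_mul, Real.exp_log (by norm_num)]
  have p3 : ∀ m : ℕ, (1/2:ℝ) ^ m = Real.exp (-(Real.log 2 * m)) := by
    intro m; rw [Real.exp_neg, ← p2]; simp
  simp only [hΦ] at hR
  refine ⟨R, ?_, ?_⟩
  · have h1 : Real.exp (-(Real.log 2 * (γ * n))) * 2 ^ R.card < 1 := by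
      linarith [Finset.sum_nonneg t0]
    rw [p2, ← Real.exp_add, Real.exp_lt_one_iff] at h1
    nlinarith
  · intro S hSF
    have h1 := Finset.single_le_sum t0 hSF
    have h2 := h1.trans_lt (by linarith : _ < (1:ℝ))
    rw [p3, ← Real.exp_add, Real.exp_lt_one_iff] at h2
    nlinarith

/-- codegree neighbourhood -/
def N {V : Type} [Fintype V] [DecidableEq V] (H : Finset (Finset V)) (v y : V) : Finset V :=
  univ.filter fun x => ({v, x, y} : Finset V) ∈ H

/-- vertices of large degree in the link -/
noncomputable def G {V : Type} [Fintype V] [DecidableEq V] (H : Finset (Finset V)) (c : ℝ) (v : V) :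
    Finset V :=
  univ.filter fun y => c ≤ ((N H v y).card : ℝ)

lemma deg_le {V : Type} [Fintype V] [DecidableEq V] (H : Finset (Finset V))
    (h3 : ∀ e ∈ H, e.card = 3) (v : V) :
    2 * (H.filter (fun e => v ∈ e)).card ≤ ∑ y, (N H v y).card := by
  set P : Finset (V × V) := univ.filter fun q => ({v, q.2, q.1} : Finset V) ∈ H with hP
  have hPc : P.card = ∑ y, (N H v y).card := by
    simp only [hP, N, Finset.card_filter, Fintype.sum_prod_type]
  rw [← hPc, Finset.card_eq_sum_card_fiberwise (f := fun q : V × V => ({v, q.2, q.1} : Finset V))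
    (t := H.filter (fun e => v ∈ e)) (by intro q hq; simp [hP] at hq ⊢; exact hq), mul_comm,
    ← smul_eq_mul]
  refine Finset.card_nsmul_le_sum _ _ _ ?_
  intro e he
  rw [Finset.mem_filter] at he
  have hc : (e.erase v).card = 2 := by rw [Finset.card_erase_of_mem he.2, h3 e he.1]
  obtain ⟨x, y, hxy, hE⟩ := Finset.card_eq_two.1 hc
  have hev : e = {v, x, y} := by rw [← hE, Finset.insert_erase he.2]
  have hev' : e = {v, y, x} := by rw [hev, Finset.pair_comm]
  have : ({(x, y), (y, x)} : Finset (V × V)).card = 2 := by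
    rw [Finset.card_pair]; intro h; exact hxy (Prod.ext_iff.1 h).1
  rw [← this]
  refine Finset.card_le_card ?_
  intro q hq
  simp only [Finset.mem_insert, Finset.mem_singleton] at hq
  simp only [hP, Finset.mem_filter, Finset.mem_univ, true_and]
  rcases hq with rfl | rfl
  · exact ⟨hev' ▸ he.1, hev'.symm⟩
  · exact ⟨hev ▸ he.1, hev.symm⟩

lemma good_card {V : Type} [Fintype V] [DecidableEq V] (γ : ℝ) (hγ0 : 0 < γ) (hγ1 : γ < 1 / 4)
    (H : Finset (Finset V)) (n : ℕ) (hV : Fintype.card V = n) (hn : 2 / γ < n)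
    (h3 : ∀ e ∈ H, e.card = 3) (v : V)
    (hd : (1 / 4 + γ) * (n.choose 2 : ℝ) ≤ ((H.filter (fun e => v ∈ e)).card : ℝ)) :
    n / 2 + γ * n / 4 ≤ ((G H (γ * n / 2) v).card : ℝ) := by
  set A := G H (γ * n / 2) v with hA
  have h1 : (2 : ℝ) * ((H.filter (fun e => v ∈ e)).card : ℝ) ≤ ∑ y, ((N H v y).card : ℝ) := by
    exact_mod_cast deg_le H h3 v
  have hbad : ∀ y ∈ Aᶜ, ((N H v y).card : ℝ) ≤ γ * n / 2 := by
    intro y hy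
    simp only [hA, G, Finset.mem_compl, Finset.mem_filter, Finset.mem_univ, true_and, not_le] at hy
    exact hy.le
  have hB := Finset.sum_le_sum hbad
  rw [Finset.sum_const, nsmul_eq_mul] at hB
  have hcard : (A.card : ℝ) + (Aᶜ.card : ℝ) = n := by
    rw [← hV]; exact_mod_cast Finset.card_add_card_compl A
  -- good part
  have hgood : ∑ y ∈ A, (N H v y).card ≤ A.card * A.card + ∑ y ∈ Aᶜ, (N H v y).card := by
    have e1 : ∑ y ∈ A, (N H v y).card = ∑ y ∈ A, (N H v y ∩ A).card + ∑ y ∈ A, (N H v y ∩ Aᶜ).card := by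
      rw [← Finset.sum_add_distrib]
      refine Finset.sum_congr rfl fun y _ => ?_
      rw [← Finset.card_inter_add_card_sdiff (N H v y) A, Finset.sdiff_eq_inter_compl]
    have e2 : ∑ y ∈ A, (N H v y ∩ A).card ≤ A.card * A.card := by
      rw [← smul_eq_mul]
      exact Finset.sum_le_card_nsmul _ _ _ fun y _ => Finset.card_le_card Finset.inter_subset_right
    have e3 : ∑ y ∈ A, (N H v y ∩ Aᶜ).card = ∑ y ∈ Aᶜ, (N H v y ∩ A).card := by
      have key : ∀ B C : Finset V, ∑ y ∈ B, (N H v y ∩ C).card =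
          ∑ y ∈ B, ∑ x ∈ C, if ({v, x, y} : Finset V) ∈ H then 1 else 0 := by
        intro B C
        refine Finset.sum_congr rfl fun y _ => ?_
        rw [← Finset.card_filter]
        congr 1
        ext x; simp [N, and_comm]
      rw [key, key, Finset.sum_comm]
      refine Finset.sum_congr rfl fun y _ => Finset.sum_congr rfl fun x _ => ?_
      rw [Finset.pair_comm]
    have e4 : ∑ y ∈ Aᶜ, (N H v y ∩ A).card ≤ ∑ y ∈ Aᶜ, (N H v y).card :=
      Finset.sum_le_sum fun y _ => Finset.card_le_card Finset.inter_subset_left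
    omega
  have hgood' : ∑ y ∈ A, ((N H v y).card : ℝ) ≤ A.card * A.card + ∑ y ∈ Aᶜ, ((N H v y).card : ℝ) := by
    exact_mod_cast hgood
  have hsplit := Finset.sum_add_sum_compl A (fun y => ((N H v y).card : ℝ))
  rw [Nat.cast_choose_two] at hd
  have hn0 : (0:ℝ) < n := lt_trans (by positivity) hn
  have hn2 : 2 < n * γ := by rwa [div_lt_iff₀ hγ0] at hn
  set m : ℝ := (A.card : ℝ)
  have hm0 : 0 ≤ m := Nat.cast_nonneg _
  have main : (1/4 + γ) * (n * (n - 1)) ≤ m * m + (n - m) * (γ * n) := by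
    have : (Aᶜ.card : ℝ) = n - m := by linarith
    rw [this] at hB
    linarith
  by_contra! hlt
  have hc : m * m - m * (γ * n) ≤ (n / 2 + γ * n / 4) * (n / 2 + γ * n / 4) - (n / 2 + γ * n / 4) * (γ * n) := by
    have : 0 ≤ (n / 2 + γ * n / 4 - m) * (n / 2 + γ * n / 4 + m - γ * n) := by
      refine mul_nonneg (by linarith) ?_
      nlinarith
    nlinarith
  have f1 : (n:ℝ) * 2 < n * (n * γ) := mul_lt_mul_of_pos_left hn2 hn0
  have f2 : 0 < γ * γ * (n * n) := by positivity
  nlinarith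

lemma greedy {V : Type} [DecidableEq V] (k : ℕ) (A : Finset V) (hA : A.card ≤ 2 * k)
    (P : Fin k → V → V → V → Prop)
    (hP : ∀ i, ∀ F : Finset V, F.card + 3 ≤ 5 * k → ∃ x y z, x ∉ F ∧ y ∉ F ∧ z ∉ F ∧
      x ≠ y ∧ x ≠ z ∧ y ≠ z ∧ P i x y z) (T : Finset (Fin k)) :
    ∃ w : Fin k → Fin 3 → V, (∀ i ∈ T, ∀ c, w i c ∉ A) ∧
      (∀ i ∈ T, ∀ j ∈ T, ∀ c d, w i c = w j d → i = j ∧ c = d) ∧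
      ∀ i ∈ T, P i (w i 0) (w i 1) (w i 2) := by
  induction T using Finset.induction_on with
  | empty =>
    rcases Nat.eq_zero_or_pos k with rfl | hk
    · exact ⟨fun i => i.elim0, by simp⟩
    · obtain ⟨x, -⟩ := hP ⟨0, hk⟩ ∅ (by simp; omega)
      exact ⟨fun _ _ => x, by simp⟩
  | insert i T hi ih =>
    obtain ⟨w, h1, h2, h3⟩ := ih
    have hT : T.card + 1 ≤ k := by
      have := Finset.card_le_univ (insert i T)
      rwa [Finset.card_insert_of_notMem hi, Fintype.card_fin] at this
    set F := A ∪ (T ×ˢ (univ : Finset (Fin 3))).image (fun q => w q.1 q.2) with hF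
    have hFc : F.card + 3 ≤ 5 * k := by
      have e1 := Finset.card_union_le A ((T ×ˢ (univ : Finset (Fin 3))).image (fun q => w q.1 q.2))
      have e2 := Finset.card_image_le (s := T ×ˢ (univ : Finset (Fin 3))) (f := fun q => w q.1 q.2)
      rw [Finset.card_product, Finset.card_univ, Fintype.card_fin] at e2
      rw [← hF] at e1
      omega
    obtain ⟨x, y, z, hx, hy, hz, hxy, hxz, hyz, hp⟩ := hP i F hFc
    have hu : ∀ c, ![x, y, z] c ∉ F := by
      intro c; fin_cases c <;> assumption
    have huA : ∀ c, ![x, y, z] c ∉ A := fun c h => hu c (Finset.mem_union_left _ h)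
    have huw : ∀ c, ∀ j ∈ T, ∀ d, ![x, y, z] c ≠ w j d := fun c j hj d h => hu c <| by
      refine Finset.mem_union_right _ (Finset.mem_image.2 ⟨(j, d), by simp [hj], h.symm⟩)
    have huu : ∀ c d, ![x, y, z] c = ![x, y, z] d → c = d := by
      intro c d h
      fin_cases c <;> fin_cases d <;> simp_all
    have hne : ∀ j ∈ T, j ≠ i := fun j hj h => hi (h ▸ hj)
    refine ⟨Function.update w i ![x, y, z], ?_, ?_, ?_⟩
    · intro j hj c
      rcases Finset.mem_insert.1 hj with rfl | hj
      · simpa using huA c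
      · rw [Function.update_of_ne (hne j hj)]; exact h1 j hj c
    · intro j hj l hl c d h
      rcases Finset.mem_insert.1 hj with rfl | hj <;> rcases Finset.mem_insert.1 hl with rfl | hl
      · simp only [Function.update_self] at h; exact ⟨rfl, huu c d h⟩
      · rw [Function.update_self, Function.update_of_ne (hne l hl)] at h
        exact absurd h (huw c l hl d)
      · rw [Function.update_self, Function.update_of_ne (hne j ‹j ∈ T›)] at h
        exact absurd h.symm (huw d j ‹j ∈ T› c)
      · rw [Function.update_of_ne (hne l hl), Function.update_of_ne (hne j hj)] at h
        exact h2 j hj l hl c d h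
    · intro j hj
      rcases Finset.mem_insert.1 hj with rfl | hj
      · simpa using hp
      · rw [Function.update_of_ne (hne j hj)]; exact h3 j hj

end Reservoir

theorem reservoir_lemma (γ : ℝ) (hγ0 : 0 < γ) (hγ1 : γ < 1 / 4) :
    ∃ n₀ : ℕ, ∀ (V : Type) [Fintype V] [DecidableEq V], ∀ (H : Finset (Finset V)) (n : ℕ),
      Fintype.card V = n → n₀ < n →
      (∀ e ∈ H, e.card = 3) →
      (∀ v : V, (1 / 4 + γ) * (n.choose 2 : ℝ) ≤
        ((H.filter (fun e => v ∈ e)).card : ℝ)) →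
      ∃ R : Finset V, (R.card : ℝ) ≤ γ * n ∧
        ∀ (k : ℕ) (a b : Fin k → V), (k : ℝ) ≤ γ ^ 3 * n / 12 →
          Function.Injective (fun p : Fin k × Fin 2 => ![a p.1, b p.1] p.2) →
          ∃ x y z : Fin k → V, Connects H k a b x y z ∧
            ∀ i : Fin k, x i ∈ R ∧ y i ∈ R ∧ z i ∈ R := by
  obtain ⟨n₁, hs⟩ := Reservoir.sampling γ hγ0 hγ1
  refine ⟨max n₁ ⌈2 / γ⌉₊, ?_⟩
  intro V _ _ H n hV hn h3 hd
  have hn1 : n₁ < n := lt_of_le_of_lt (le_max_left _ _) hn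
  have hn2 : 2 / γ < n := lt_of_le_of_lt (Nat.le_ceil _)
    (by exact_mod_cast lt_of_le_of_lt (le_max_right _ _) hn)
  have hnn : (0:ℝ) ≤ n := Nat.cast_nonneg n
  set c := γ * n / 2 with hc
  have hg := fun v => Reservoir.good_card γ hγ0 hγ1 H n hV hn2 h3 v (hd v)
  set F : Finset (Finset V) :=
    ((univ : Finset (V × V)).image (fun q => Reservoir.G H c q.1 ∩ Reservoir.G H c q.2) ∪
    (univ : Finset (V × V)).image (fun q => Reservoir.N H q.1 q.2)).filter
      (fun S => c ≤ (S.card : ℝ)) with hF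
  have hFc : (F.card : ℝ) ≤ 2 * (n : ℝ) ^ 2 := by
    have e0 : F.card ≤ _ := (Finset.card_filter_le _ _).trans (Finset.card_union_le _ _)
    have e1 := Finset.card_image_le (s := (univ : Finset (V × V)))
      (f := fun q => Reservoir.G H c q.1 ∩ Reservoir.G H c q.2)
    have e2 := Finset.card_image_le (s := (univ : Finset (V × V)))
      (f := fun q => Reservoir.N H q.1 q.2)
    rw [Finset.card_univ, Fintype.card_prod, hV] at e1 e2
    have : F.card ≤ 2 * n ^ 2 := by nlinarith
    exact_mod_cast this
  obtain ⟨R, hR, hRS⟩ := hs V F n hV hn1 hFc (fun S hS => (Finset.mem_filter.1 hS).2)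
  refine ⟨R, hR, ?_⟩
  intro k a b hk hinj
  have hk5 : ∀ S ∈ F, 5 * k ≤ (R ∩ S).card := by
    intro S hS
    have h1 := hRS S hS
    have h2 : γ ^ 3 * n ≤ γ ^ 2 * n / 4 := by
      have : 0 ≤ γ ^ 2 * n := by positivity
      nlinarith
    have : (5 * k : ℝ) ≤ ((R ∩ S).card : ℝ) := by linarith
    exact_mod_cast this
  have hY : ∀ u v, Reservoir.G H c u ∩ Reservoir.G H c v ∈ F := by
    intro u v
    refine Finset.mem_filter.2 ⟨Finset.mem_union_left _ (Finset.mem_image.2 ⟨(u, v), by simp, rfl⟩), ?_⟩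
    have e1 : (((Reservoir.G H c u ∪ Reservoir.G H c v).card : ℕ) : ℝ) ≤ n := by
      rw [← hV]; exact_mod_cast Finset.card_le_univ _
    have e2 : (((Reservoir.G H c u ∪ Reservoir.G H c v).card : ℕ) : ℝ) +
        ((Reservoir.G H c u ∩ Reservoir.G H c v).card : ℝ) =
        ((Reservoir.G H c u).card : ℝ) + ((Reservoir.G H c v).card : ℝ) := by
      exact_mod_cast Finset.card_union_add_card_inter _ _
    have := hg u
    have := hg v
    linarith
  have hN : ∀ u y, y ∈ Reservoir.G H c u → Reservoir.N H u y ∈ F := by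
    intro u y hy
    exact Finset.mem_filter.2 ⟨Finset.mem_union_right _ (Finset.mem_image.2 ⟨(u, y), by simp, rfl⟩),
      (Finset.mem_filter.1 hy).2⟩
  have pick : ∀ S ∈ F, ∀ B : Finset V, B.card < 5 * k → ∃ x ∈ R, x ∈ S ∧ x ∉ B := by
    intro S hS B hB
    obtain ⟨x, hx, hxB⟩ := Finset.exists_mem_notMem_of_card_lt_card (hB.trans_le (hk5 S hS))
    exact ⟨x, (Finset.mem_inter.1 hx).1, (Finset.mem_inter.1 hx).2, hxB⟩
  set A : Finset V := univ.image (fun p : Fin k × Fin 2 => ![a p.1, b p.1] p.2) with hA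
  have hAc : A.card ≤ 2 * k := by
    refine Finset.card_image_le.trans ?_
    simp [mul_comm]
  obtain ⟨w, w1, w2, w3⟩ := Reservoir.greedy k A hAc
    (fun i x y z => (x ∈ R ∧ y ∈ R ∧ z ∈ R) ∧
      ({a i, x, y} : Finset V) ∈ H ∧ ({y, z, b i} : Finset V) ∈ H) (by
    intro i B hB
    obtain ⟨y, hyR, hyS, hyB⟩ := pick _ (hY (a i) (b i)) B (by omega)
    rw [Finset.mem_inter] at hyS
    obtain ⟨x, hxR, hxS, hxB⟩ := pick _ (hN _ _ hyS.1) (insert y B)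
      (lt_of_le_of_lt (Finset.card_insert_le _ _) (by omega))
    obtain ⟨z, hzR, hzS, hzB⟩ := pick _ (hN _ _ hyS.2) (insert x (insert y B))
      (lt_of_le_of_lt (Finset.card_insert_le _ _)
        (lt_of_le_of_lt (Nat.add_le_add_right (Finset.card_insert_le _ _) 1) (by omega)))
    simp only [Finset.mem_insert, not_or] at hxB hzB
    refine ⟨x, y, z, hxB.2, hyB, hzB.2.2, hxB.1, Ne.symm hzB.1, Ne.symm hzB.2.1,
      ⟨hxR, hyR, hzR⟩, (Finset.mem_filter.1 hxS).2, ?_⟩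
    have := (Finset.mem_filter.1 hzS).2
    have e : ({y, z, b i} : Finset V) = {b i, z, y} := by ext t; simp; tauto
    rw [e]; exact this) univ
  refine ⟨fun i => w i 0, fun i => w i 1, fun i => w i 2, ⟨?_, fun i => (w3 i (mem_univ _)).2⟩,
    fun i => (w3 i (mem_univ _)).1⟩
  have ha : ∀ i, a i ∈ A := fun i => Finset.mem_image.2 ⟨(i, 0), by simp, rfl⟩
  have hb : ∀ i, b i ∈ A := fun i => Finset.mem_image.2 ⟨(i, 1), by simp, rfl⟩
  have hwa : ∀ i j d, a i ≠ w j d := fun i j d h => w1 j (mem_univ _) d (h ▸ ha i)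
  have hwb : ∀ i j d, b i ≠ w j d := fun i j d h => w1 j (mem_univ _) d (h ▸ hb i)
  have haa : ∀ i j, a i = a j → i = j := fun i j h =>
    (Prod.ext_iff.1 (@hinj (i, 0) (j, 0) (by simpa using h))).1
  have hbb : ∀ i j, b i = b j → i = j := fun i j h =>
    (Prod.ext_iff.1 (@hinj (i, 1) (j, 1) (by simpa using h))).1
  have hab : ∀ i j, a i ≠ b j := fun i j h => by
    have := (Prod.ext_iff.1 (@hinj (i, 0) (j, 1) (by simpa using h))).2
    simp at this
  have hww : ∀ i j c d, w i c = w j d → i = j ∧ c = d :=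
    fun i j => w2 i (mem_univ _) j (mem_univ _)
  have hwa' := fun i j d => (hwa i j d).symm
  have hwb' := fun i j d => (hwb i j d).symm
  have hab' := fun i j => (hab i j).symm
  rintro ⟨i, s⟩ ⟨j, t⟩ h
  fin_cases s <;> fin_cases t <;> simp at h ⊢ <;>
    first
    | exact haa _ _ h
    | exact hbb _ _ h
    | exact (hab _ _ h).elim
    | exact (hab' _ _ h).elim
    | exact (hwa _ _ _ h).elim
    | exact (hwa' _ _ _ h).elim
    | exact (hwb _ _ _ h).elim
    | exact (hwb' _ _ _ h).elim
    | exact (hww _ _ _ _ h).1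
    | exact absurd (hww _ _ _ _ h).2 (by decide)
end

section
/- For every γ > 0 there exist β > 0 and n₀ such that the following holds. Let H=(V,E) be a 3-uniform hypergraph on n > n₀ vertices with δ₁(H) ≥ (5/8 + γ)²·C(n,2). Then there is a loose path P in H with |V(P)| ≤ γ⁷n such that for every subset U ⊆ V∖V(P) with |U| ≤ βn and |U| even, there exists a loose path Q in H with V(Q) = V(P) ∪ U such that P and Q have exactly the same ends. -/
open Finset

/-- `f` describes a loose path with `k ≥ 1` edges in the `3`-uniform hypergraph `H`:
the vertices `f 0, f 1, …, f (2k)` are distinct, and for every `i < k` the triple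
`{f (2i), f (2i+1), f (2i+2)}` is an edge of `H`.  The ends of the path are
`f 0` and `f (2k)`. -/
def IsLoosePath {V : Type} [DecidableEq V] (H : Finset (Finset V)) (k : ℕ) (f : ℕ → V) :
    Prop :=
  1 ≤ k ∧
  (∀ i ≤ 2 * k, ∀ j ≤ 2 * k, f i = f j → i = j) ∧
  ∀ i < k, ({f (2 * i), f (2 * i + 1), f (2 * i + 2)} : Finset V) ∈ H

/-- The vertex set of the loose path described by `f` with `k` edges. -/
def pathVerts {V : Type} [DecidableEq V] (k : ℕ) (f : ℕ → V) : Finset V :=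
  (Finset.range (2 * k + 1)).image f


namespace AbsAux

inductive Reach {V : Type} [DecidableEq V] (H : Finset (Finset V)) : V → V → Finset V → Prop
  | edge (a c b : V) : ({a, c, b} : Finset V) ∈ H → a ≠ b → a ≠ c → c ≠ b → Reach H a b {a, c, b}
  | cons (a c b d : V) (S : Finset V) : ({a, c, b} : Finset V) ∈ H → Reach H b d S → a ∉ S → c ∉ S →
      a ≠ c → Reach H a d (insert a (insert c S))

lemma Reach.mem {V : Type} [DecidableEq V] {H : Finset (Finset V)} {a b : V} {S : Finset V}
    (h : Reach H a b S) : a ∈ S ∧ b ∈ S := by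
  induction h with
  | edge => simp
  | cons a c b d S he h' haS hcS hac ih => simp [ih.2]

lemma Reach.trans {V : Type} [DecidableEq V] {H : Finset (Finset V)} {a b d : V} {S T : Finset V}
    (h : Reach H a b S) (h2 : Reach H b d T) (hd : ∀ z ∈ S, z ∈ T → z = b) :
    Reach H a d (S ∪ T) := by
  have hbT : b ∈ T := by
    cases h2 <;> simp
  induction h with
  | edge a c b he hab hac hcb =>
    have := Reach.cons a c b d T he h2 (fun h => hab (hd a (by simp) h))
      (fun h => hcb (hd c (by simp) h)) hac
    convert this using 1
    ext z
    simp only [mem_union, mem_insert, mem_singleton]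
    constructor
    · rintro ((h | h | rfl) | h) <;> tauto
    · tauto
  | cons a c b' b S he h' haS hcS hac ih =>
    have hbS : b ∈ S := by
      exact h'.mem.2
    have h3 := ih h2 (fun z hz => hd z (by simp [hz])) hbT
    have := Reach.cons a c b' d (S ∪ T) he h3
      (by
        simp only [mem_union, not_or]
        refine ⟨haS, fun h => haS ?_⟩
        rw [hd a (by simp) h]; exact hbS)
      (by
        simp only [mem_union, not_or]
        refine ⟨hcS, fun h => hcS ?_⟩
        rw [hd c (by simp) h]; exact hbS) hac
    convert this using 1
    ext z; simp

lemma Reach.toPath {V : Type} [DecidableEq V] {H : Finset (Finset V)} {a b : V} {S : Finset V}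
    (h : Reach H a b S) : ∃ (k : ℕ) (f : ℕ → V), IsLoosePath H k f ∧ pathVerts k f = S ∧ f 0 = a ∧
      f (2 * k) = b := by
  induction h with
  | edge a c b he hab hac hcb =>
    refine ⟨1, fun i => if i = 0 then a else if i = 1 then c else b, ⟨le_rfl, ?_, ?_⟩, ?_, by simp, by simp⟩
    · intro i hi j hj
      have : i = 0 ∨ i = 1 ∨ i = 2 := by omega
      have : j = 0 ∨ j = 1 ∨ j = 2 := by omega
      rcases ‹i = 0 ∨ i = 1 ∨ i = 2› with rfl | rfl | rfl <;>
      rcases ‹j = 0 ∨ j = 1 ∨ j = 2› with rfl | rfl | rfl <;> simp [hab, hac, hcb, hab.symm, hac.symm, hcb.symm]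
    · intro i hi
      have : i = 0 := by omega
      subst this; simpa using he
    · unfold pathVerts
      ext z; simp [Finset.range_add_one]; tauto
  | cons a c b d S he h' haS hcS hac ih =>
    obtain ⟨k, f, ⟨hk, hinj, hE⟩, hV, h0, h1⟩ := ih
    have hmem : ∀ i ≤ 2 * k, f i ∈ S := by
      intro i hi; rw [← hV]; unfold pathVerts
      exact mem_image_of_mem _ (by simp; omega)
    refine ⟨k + 1, fun i => if i = 0 then a else if i = 1 then c else f (i - 2), ⟨by omega, ?_, ?_⟩, ?_, by simp, ?_⟩
    · intro i hi j hj
      dsimp only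
      split_ifs with h1 h2 h3 h4 h5 h6 h7 h8
      · omega
      · intro h; exact absurd h hac
      · intro h; exact absurd (h ▸ hmem (j - 2) (by omega)) haS
      · intro h; exact absurd h.symm hac
      · omega
      · intro h; exact absurd (h ▸ hmem (j - 2) (by omega)) hcS
      · intro h; exact absurd (h ▸ hmem (i - 2) (by omega)) haS
      · intro h; exact absurd (h ▸ hmem (i - 2) (by omega)) hcS
      · intro h
        have := hinj (i - 2) (by omega) (j - 2) (by omega) h
        omega
    · intro i hi
      rcases Nat.eq_zero_or_pos i with rfl | hp
      · simp [h0]; exact he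
      · have := hE (i - 1) (by omega)
        have e1 : 2 * (i - 1) = 2 * i - 2 := by omega
        have e2 : 2 * i - 2 + 1 = 2 * i + 1 - 2 := by omega
        have e3 : 2 * i - 2 + 2 = 2 * i + 2 - 2 := by omega
        rw [e1, e2, e3] at this
        dsimp only
        rw [if_neg (by omega), if_neg (by omega), if_neg (by omega), if_neg (by omega), if_neg (by omega), if_neg (by omega)]
        exact this
    · rw [← hV]; unfold pathVerts
      ext z
      simp only [mem_image, mem_range, mem_insert]
      constructor
      · rintro ⟨i, hi, rfl⟩
        split_ifs with h1 h2
        · simp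
        · simp
        · right; right; exact ⟨i - 2, by omega, rfl⟩
      · rintro (rfl | rfl | ⟨i, hi, rfl⟩)
        · exact ⟨0, by omega, by simp⟩
        · exact ⟨1, by omega, by simp⟩
        · exact ⟨i + 2, by omega, by simp⟩
    · dsimp only
      rw [if_neg (by omega), if_neg (by omega), ← h1]; congr 1

lemma Reach.congr {V : Type} [DecidableEq V] {H : Finset (Finset V)} {a b : V} {S T : Finset V}
    (h : Reach H a b S) (e : S = T) : Reach H a b T := e ▸ h

/-- neighbourhood of a pair -/
def Nb {V : Type} [Fintype V] [DecidableEq V] (H : Finset (Finset V)) (u v : V) : Finset V :=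
  univ.filter (fun w => ({u, v, w} : Finset V) ∈ H)

open Classical in
noncomputable def Big {V : Type} [Fintype V] [DecidableEq V] (H : Finset (Finset V)) (s : ℝ) (v : V) :
    Finset V :=
  univ.filter (fun w => s ≤ ((Nb H v w).card : ℝ))

lemma sum_Nb {V : Type} [Fintype V] [DecidableEq V] (H : Finset (Finset V))
    (h3 : ∀ e ∈ H, e.card = 3) (v : V) :
    2 * (H.filter (fun e => v ∈ e)).card ≤ ∑ w, (Nb H v w).card := by
  have h1 : ∑ w, (Nb H v w).card =
      ((univ : Finset V).sigma (fun w => Nb H v w)).card := by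
    rw [card_sigma]
  rw [h1, card_eq_sum_card_fiberwise (f := fun p : (Σ _ : V, V) => ({v, p.1, p.2} : Finset V))
    (t := H.filter (fun e => v ∈ e))]
  · rw [mul_comm, ← smul_eq_mul]
    refine card_nsmul_le_sum _ _ _ (fun e he => ?_)
    rw [mem_filter] at he
    have hc : (e.erase v).card = 2 := by rw [card_erase_of_mem he.2, h3 e he.1]
    obtain ⟨a, b, hab, hE⟩ := card_eq_two.1 hc
    have he1 : e = {v, a, b} := by rw [← hE, insert_erase he.2]
    have he2 : e = {v, b, a} := by rw [he1]; ext z; simp; tauto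
    have : ({⟨a, b⟩, ⟨b, a⟩} : Finset (Σ _ : V, V)).card = 2 := by
      rw [card_pair]; simp [hab]
    rw [← this]
    refine card_le_card ?_
    intro p hp
    simp only [mem_insert, mem_singleton] at hp
    simp only [mem_filter, mem_sigma, mem_univ, true_and, Nb]
    rcases hp with rfl | rfl
    · exact ⟨he1 ▸ he.1, he1.symm⟩
    · exact ⟨he2 ▸ he.1, he2.symm⟩
  · intro p hp
    simp only [coe_sigma, Nb] at hp ⊢
    simp at hp ⊢
    exact hp

lemma sum_bound {V : Type} [Fintype V] [DecidableEq V] (H : Finset (Finset V)) (s t : ℝ) (v : V)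
    (hst : s ≤ t) (hs : 0 ≤ s) :
    (∑ w, ((Nb H v w).card : ℝ)) ≤ (Big H t v).card * (Big H s v).card +
      ((Big H s v).card - (Big H t v).card) * t + 2 * s * Fintype.card V := by
  classical
  set A := Big H s v with hA
  set B := Big H t v with hB
  have hBA : B ⊆ A := by
    intro w; simp only [hA, hB, Big, mem_filter, mem_univ, true_and]; exact hst.trans
  have hout : ∑ w ∈ univ \ A, ((Nb H v w).card : ℝ) ≤ s * Fintype.card V := by
    calc _ ≤ ∑ w ∈ univ \ A, s := by
          refine sum_le_sum (fun w hw => ?_)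
          simp only [hA, Big, mem_sdiff, mem_filter, mem_univ, true_and, not_le] at hw
          exact hw.le
      _ ≤ ∑ w : V, s := sum_le_sum_of_subset_of_nonneg (subset_univ _) (fun _ _ _ => hs)
      _ = _ := by simp [mul_comm]
  have hmid : ∑ w ∈ A \ B, ((Nb H v w).card : ℝ) ≤ (A.card - B.card) * t := by
    calc _ ≤ ∑ w ∈ A \ B, t := by
          refine sum_le_sum (fun w hw => ?_)
          simp only [hB, Big, mem_sdiff, mem_filter, mem_univ, true_and, not_le] at hw
          exact hw.2.le
      _ = _ := by rw [sum_const, nsmul_eq_mul, card_sdiff_of_subset hBA, Nat.cast_sub (card_le_card hBA)]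
  have hdc : ∑ w : V, ((Nb H v w \ A).card : ℝ) = ∑ w ∈ univ \ A, ((Nb H v w).card : ℝ) := by
    have : ∑ w : V, ((Nb H v w \ A).card) = ∑ w ∈ univ \ A, ((Nb H v w).card) := by
      simp only [card_eq_sum_ones]
      refine sum_comm' ?_
      intro x y
      simp only [Nb, mem_sdiff, mem_filter, mem_univ, true_and, and_true]
      rw [show ({v, x, y} : Finset V) = {v, y, x} by ext z; simp; tauto]
    exact_mod_cast this
  have hin : ∑ w ∈ B, ((Nb H v w).card : ℝ) ≤ B.card * A.card + s * Fintype.card V := by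
    calc _ ≤ ∑ w ∈ B, ((A.card : ℝ) + ((Nb H v w \ A).card : ℝ)) := by
          refine sum_le_sum (fun w hw => ?_)
          have h1 := card_le_card (s := Nb H v w) (t := A ∪ (Nb H v w \ A)) (by intro z; simp; tauto)
          have h2 := card_union_le A (Nb H v w \ A)
          exact_mod_cast h1.trans h2
      _ = B.card * A.card + ∑ w ∈ B, ((Nb H v w \ A).card : ℝ) := by
          rw [sum_add_distrib]; simp
      _ ≤ B.card * A.card + ∑ w : V, ((Nb H v w \ A).card : ℝ) := by
          gcongr; exact subset_univ _
      _ ≤ _ := by rw [hdc]; gcongr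
  have e1 := sum_sdiff (f := fun w => ((Nb H v w).card : ℝ)) (subset_univ A)
  have e2 := sum_sdiff (f := fun w => ((Nb H v w).card : ℝ)) hBA
  linarith

/-- standing assumption -/
def Std {V : Type} [Fintype V] [DecidableEq V] (H : Finset (Finset V)) (g : ℝ) : Prop :=
  ∀ v, (25 / 64 + g) * (Fintype.card V : ℝ) ^ 2 ≤ ∑ w, ((Nb H v w).card : ℝ)

lemma card_A {V : Type} [Fintype V] [DecidableEq V] {H : Finset (Finset V)} {g d : ℝ}
    (hS : Std H g) (hd : 0 < d) (hdg : d * 10 ≤ g) (hd1 : d ≤ 1) (v : V) :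
    (5 / 8 + d) * Fintype.card V ≤ ((Big H (d * Fintype.card V) v).card : ℝ) := by
  have h1 := hS v
  have h2 := sum_bound H (d * Fintype.card V) (d * Fintype.card V) v le_rfl (by positivity)
  set N := (Fintype.card V : ℝ)
  set a := ((Big H (d * N) v).card : ℝ)
  have hN : 0 ≤ N := by positivity
  have ha : 0 ≤ a := by positivity
  have h3 : ((5 / 8 + d) * N) ^ 2 ≤ a ^ 2 := by
    have : ((5/8+d)*N)^2 ≤ (25/64 + g - 2*d) * N^2 := by
      rw [mul_pow]; gcongr; nlinarith
    nlinarith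
  exact (abs_le_of_sq_le_sq' h3 ha).2

lemma card_B {V : Type} [Fintype V] [DecidableEq V] {H : Finset (Finset V)} {g d : ℝ}
    (hS : Std H g) (hd : 0 < d) (hdg : d * 10 ≤ g) (v : V) :
    d * Fintype.card V ≤ ((Big H ((3 / 8 + d) * Fintype.card V) v).card : ℝ) := by
  have h1 := hS v
  set N := (Fintype.card V : ℝ) with hN
  have hN0 : 0 ≤ N := by positivity
  set B := Big H ((3 / 8 + d) * N) v with hB
  have h2 : ∑ w, ((Nb H v w).card : ℝ) ≤ B.card * N + N * ((3 / 8 + d) * N) := by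
    rw [← sum_sdiff (subset_univ B), add_comm]
    refine add_le_add ?_ ?_
    · calc _ ≤ ∑ w ∈ B, N := sum_le_sum (fun w _ => by rw [hN]; exact_mod_cast card_le_univ _)
        _ = _ := by simp
    · calc _ ≤ ∑ w ∈ univ \ B, ((3 / 8 + d) * N) := by
            refine sum_le_sum (fun w hw => ?_)
            simp only [hB, Big, mem_sdiff, mem_filter, mem_univ, true_and, not_le] at hw
            exact hw.le
        _ ≤ ∑ w : V, ((3 / 8 + d) * N) :=
            sum_le_sum_of_subset_of_nonneg (subset_univ _) (fun _ _ _ => by positivity)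
        _ = _ := by simp [hN]
  rcases hN0.eq_or_lt with h0 | h0
  · rw [← h0]; simp
  · have : (25/64+g) * N ≤ B.card + (3/8+d) * N := by
      refine le_of_mul_le_mul_right ?_ h0
      nlinarith
    nlinarith

lemma claim_aux {a b N d g : ℝ} (hd : 0 < d) (hd1 : d ≤ 1 / 8) (hdg : d * 10 ≤ g) (hN : 0 < N)
    (ha : (5 / 8 + d) * N ≤ a) (ha' : a ≤ N) (hb : b ≤ N - a + d * N)
    (h : (25 / 64 + g) * N ^ 2 ≤ b * a + (a - b) * ((3 / 8 + d) * N) + 2 * (d * N) * N) : False := by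
  have h1 : b * (a - (3/8+d)*N) ≤ (N - a + d * N) * (a - (3/8+d)*N) := by
    apply mul_le_mul_of_nonneg_right hb; nlinarith
  have h2 : (25 / 64 + g) * N ^ 2 ≤ (N - a + d * N) * (a - (3/8+d)*N) + a * ((3 / 8 + d) * N) + 2 * (d * N) * N := by
    linarith
  nlinarith [sq_nonneg (a - 7/8*N), mul_pos hd hN, mul_pos hN hN, mul_pos hd (mul_pos hN hN), mul_nonneg hd.le (mul_nonneg hN.le (sub_nonneg.2 ha')), mul_pos (mul_pos hd hd) (mul_pos hN hN)]

lemma claim {V : Type} [Fintype V] [DecidableEq V] {H : Finset (Finset V)} {g d : ℝ}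
    (hS : Std H g) (hd : 0 < d) (hdg : d * 10 ≤ g) (hd1 : d ≤ 1 / 8) (hN : 0 < Fintype.card V) (x y : V) :
    d * Fintype.card V ≤
      ((Big H (d * Fintype.card V) x ∩ Big H ((3 / 8 + d) * Fintype.card V) y).card : ℝ) ∨
    d * Fintype.card V ≤
      ((Big H (d * Fintype.card V) y ∩ Big H ((3 / 8 + d) * Fintype.card V) x).card : ℝ) := by
  by_contra! hc
  obtain ⟨c1, c2⟩ := hc
  have hN' : (0:ℝ) < Fintype.card V := by exact_mod_cast hN
  have key : ∀ x y : V, 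
      ((Big H (d * Fintype.card V) y ∩ Big H ((3 / 8 + d) * Fintype.card V) x).card : ℝ) < d * Fintype.card V →
      ((Big H (d * Fintype.card V) x).card : ℝ) ≤ (Big H (d * Fintype.card V) y).card → False := by
    intro x y hxy hle
    have h1 := hS x
    have h2 := sum_bound H (d * Fintype.card V) ((3 / 8 + d) * Fintype.card V) x (by nlinarith) (by positivity)
    refine claim_aux hd hd1 hdg hN' (card_A hS hd hdg (by linarith) x) (by exact_mod_cast card_le_univ _) ?_ (h1.trans h2)
    have h3 := card_union_add_card_inter (Big H (d * Fintype.card V) y) (Big H ((3 / 8 + d) * Fintype.card V) x)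
    have h4 := card_le_univ (Big H (d * Fintype.card V) y ∪ Big H ((3 / 8 + d) * Fintype.card V) x)
    have h3' : ((Big H (d * Fintype.card V) y ∪ Big H ((3 / 8 + d) * Fintype.card V) x).card : ℝ) +
      ((Big H (d * Fintype.card V) y ∩ Big H ((3 / 8 + d) * Fintype.card V) x).card : ℝ) = 
      ((Big H (d * Fintype.card V) y).card : ℝ) + (Big H ((3 / 8 + d) * Fintype.card V) x).card := by
      exact_mod_cast h3
    have h4' : ((Big H (d * Fintype.card V) y ∪ Big H ((3 / 8 + d) * Fintype.card V) x).card : ℝ) ≤ Fintype.card V := by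
      exact_mod_cast h4
    linarith
  rcases le_total ((Big H (d * Fintype.card V) x).card : ℝ) (Big H (d * Fintype.card V) y).card with h | h
  · exact key x y c2 h
  · exact key y x c1 h

abbrev T7 (V : Type) := V × V × V × V × V × V × V

/-- order of entries: v4, v2, v5, v6, v3, v1, v7 -/
def AbsE {V : Type} [DecidableEq V] (H : Finset (Finset V)) (x y : V) : T7 V → Prop :=
  fun ⟨v4, v2, v5, v6, v3, v1, v7⟩ => ({x, v4, v2} : Finset V) ∈ H ∧ ({y, v4, v6} : Finset V) ∈ H ∧
    ({v4, v5, v3} : Finset V) ∈ H ∧ ({v2, v3, v1} : Finset V) ∈ H ∧ ({v5, v6, v7} : Finset V) ∈ H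

def Dis {V : Type} : T7 V → Prop :=
  fun ⟨v4, v2, v5, v6, v3, v1, v7⟩ => [v4, v2, v5, v6, v3, v1, v7].Nodup

def vs {V : Type} [DecidableEq V] : T7 V → Finset V :=
  fun ⟨v4, v2, v5, v6, v3, v1, v7⟩ => {v4, v2, v5, v6, v3, v1, v7}

def st {V : Type} : T7 V → V := fun ⟨_, _, _, _, _, v1, _⟩ => v1
def en {V : Type} : T7 V → V := fun ⟨_, _, _, _, _, _, v7⟩ => v7

def Abs {V : Type} [DecidableEq V] (H : Finset (Finset V)) (t : T7 V) (x y : V) : Prop :=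
  Dis t ∧ (AbsE H x y t ∨ AbsE H y x t)

lemma perm3 {V : Type} [DecidableEq V] (a b c : V) :
    ({a, b, c} : Finset V) = {b, a, c} ∧ ({a, b, c} : Finset V) = {a, c, b} ∧
    ({a, b, c} : Finset V) = {c, b, a} ∧ ({a, b, c} : Finset V) = {b, c, a} ∧
    ({a, b, c} : Finset V) = {c, a, b} := by
  refine ⟨?_, ?_, ?_, ?_, ?_⟩ <;> ext z <;> simp <;> tauto

lemma AbsE.reach0 {V : Type} [DecidableEq V] {H : Finset (Finset V)} {t : T7 V} {x y : V}
    (hd : Dis t) (h : AbsE H x y t) : Reach H (st t) (en t) (vs t) := by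
  obtain ⟨v4, v2, v5, v6, v3, v1, v7⟩ := t
  simp only [Dis, List.nodup_cons, List.mem_cons, List.not_mem_nil, not_or, or_false] at hd
  obtain ⟨⟨n1, n2, n3, n4, n5, n6⟩, ⟨n7, n8, n9, n10, n11⟩, ⟨n12, n13, n14, n15⟩, ⟨n16, n17, n18⟩,
    ⟨n19, n20⟩, n21, -⟩ := hd
  obtain ⟨e1, e2, e3, e4, e5⟩ := h
  simp only [st, en, vs]
  have r3 : Reach H v5 v7 {v5, v6, v7} := by
    refine Reach.edge v5 v6 v7 e5 ?_ ?_ ?_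
    all_goals try simp only [mem_insert, mem_singleton, not_or]
    all_goals try and_intros
    all_goals first | assumption | exact Ne.symm (by assumption)
  have r2 : Reach H v3 v7 {v3, v4, v5, v6, v7} := by
    refine Reach.cons v3 v4 v5 v7 _ ((perm3 v4 v5 v3).2.2.2.2 ▸ e3) r3
      ?_ ?_ ?_
    all_goals try simp only [mem_insert, mem_singleton, not_or]
    all_goals try and_intros
    all_goals first | assumption | exact Ne.symm (by assumption)
  have r1 : Reach H v1 v7 {v1, v2, v3, v4, v5, v6, v7} := by
    refine Reach.cons v1 v2 v3 v7 _ ((perm3 v2 v3 v1).2.2.2.2 ▸ e4) r2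
      ?_ ?_ ?_
    all_goals try simp only [mem_insert, mem_singleton, not_or]
    all_goals try and_intros
    all_goals first | assumption | exact Ne.symm (by assumption)
  refine r1.congr ?_
  apply Finset.Subset.antisymm <;> simp [insert_subset_iff]

lemma AbsE.reach1 {V : Type} [DecidableEq V] {H : Finset (Finset V)} {t : T7 V} {x y : V}
    (hd : Dis t) (h : AbsE H x y t) (hxy : x ≠ y) (hx : x ∉ vs t) (hy : y ∉ vs t) :
    Reach H (st t) (en t) (vs t ∪ {x, y}) := by
  obtain ⟨v4, v2, v5, v6, v3, v1, v7⟩ := t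
  simp only [Dis, List.nodup_cons, List.mem_cons, List.not_mem_nil, not_or, or_false] at hd
  obtain ⟨⟨n1, n2, n3, n4, n5, n6⟩, ⟨n7, n8, n9, n10, n11⟩, ⟨n12, n13, n14, n15⟩, ⟨n16, n17, n18⟩,
    ⟨n19, n20⟩, n21, -⟩ := hd
  obtain ⟨e1, e2, e3, e4, e5⟩ := h
  simp only [vs, mem_insert, mem_singleton, not_or] at hx hy
  obtain ⟨x1, x2, x3, x4, x5, x6, x7⟩ := hx
  obtain ⟨y1, y2, y3, y4, y5, y6, y7⟩ := hy
  simp only [st, en, vs]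
  have r4 : Reach H v6 v7 {v6, v5, v7} := by
    refine Reach.edge v6 v5 v7 ((perm3 v5 v6 v7).1 ▸ e5) ?_ ?_ ?_
    all_goals try simp only [mem_insert, mem_singleton, not_or]
    all_goals try and_intros
    all_goals first | assumption | exact Ne.symm (by assumption)
  have r3 : Reach H v4 v7 {v4, y, v6, v5, v7} := by
    refine Reach.cons v4 y v6 v7 _ ((perm3 y v4 v6).1 ▸ e2) r4
      ?_ ?_ ?_
    all_goals try simp only [mem_insert, mem_singleton, not_or]
    all_goals try and_intros
    all_goals first | assumption | exact Ne.symm (by assumption)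
  have r2 : Reach H v2 v7 {v2, x, v4, y, v6, v5, v7} := by
    refine Reach.cons v2 x v4 v7 _ ((perm3 x v4 v2).2.2.2.2 ▸ e1) r3
      ?_ ?_ ?_
    all_goals try simp only [mem_insert, mem_singleton, not_or]
    all_goals try and_intros
    all_goals first | assumption | exact Ne.symm (by assumption)
  have r1 : Reach H v1 v7 {v1, v3, v2, x, v4, y, v6, v5, v7} := by
    refine Reach.cons v1 v3 v2 v7 _ ((perm3 v2 v3 v1).2.2.1 ▸ e4) r2
      ?_ ?_ ?_
    all_goals try simp only [mem_insert, mem_singleton, not_or]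
    all_goals try and_intros
    all_goals first | assumption | exact Ne.symm (by assumption)
  refine r1.congr ?_
  apply Finset.Subset.antisymm <;> simp [insert_subset_iff]

lemma Abs.reach0 {V : Type} [DecidableEq V] {H : Finset (Finset V)} {t : T7 V} {x y : V}
    (h : Abs H t x y) : Reach H (st t) (en t) (vs t) := by
  rcases h.2 with h' | h' <;> exact h'.reach0 h.1

lemma Abs.reach1 {V : Type} [DecidableEq V] {H : Finset (Finset V)} {t : T7 V} {x y : V}
    (h : Abs H t x y) (hxy : x ≠ y) (hx : x ∉ vs t) (hy : y ∉ vs t) :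
    Reach H (st t) (en t) (vs t ∪ {x, y}) := by
  rcases h.2 with h' | h'
  · exact h'.reach1 h.1 hxy hx hy
  · rw [pair_comm]; exact h'.reach1 h.1 hxy.symm hy hx

open Classical in
lemma count_step {α β : Type} [Fintype α] [Fintype β] (P : α × β → Prop) (A : Finset α) (p q : ℝ)
    (hp : p ≤ A.card) (hq : 0 ≤ q) (h : ∀ a ∈ A, q ≤ ((univ.filter (fun b => P (a, b))).card : ℝ)) :
    p * q ≤ ((univ.filter P).card : ℝ) := by
  have h1 : (A.sigma (fun a => univ.filter (fun b => P (a, b)))).card ≤ (univ.filter P).card := by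
    refine card_le_card_of_injOn (fun x => (x.1, x.2)) ?_ ?_
    · intro x hx; simp at hx ⊢; exact hx.2
    · rintro ⟨a, b⟩ _ ⟨a', b'⟩ _ h; simpa using h
  rw [card_sigma] at h1
  calc p * q ≤ A.card * q := by gcongr
    _ = ∑ a ∈ A, q := by simp
    _ ≤ ∑ a ∈ A, ((univ.filter (fun b => P (a, b))).card : ℝ) := sum_le_sum h
    _ ≤ _ := by exact_mod_cast h1

lemma pick {V : Type} [DecidableEq V] (C W E : Finset V) (d : ℝ) (hC : d ≤ C.card)
    (hW : (W.card : ℝ) + 7 ≤ d / 2) (hE : E.card ≤ 7) : d / 2 ≤ ((C \ (W ∪ E)).card : ℝ) := by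
  have h1 := le_card_sdiff (W ∪ E) C
  have h2 := card_union_le W E
  have h3 : (C.card : ℝ) ≤ (C \ (W ∪ E)).card + W.card + 7 := by
    have : C.card ≤ (C \ (W ∪ E)).card + W.card + 7 := by omega
    exact_mod_cast this
  linarith

lemma inter_big {V : Type} [Fintype V] [DecidableEq V] (A B : Finset V) (d p q : ℝ)
    (hA : p ≤ A.card) (hB : q ≤ B.card) (h : Fintype.card V + d ≤ p + q) :
    d ≤ ((A ∩ B).card : ℝ) := by
  have h1 := card_union_add_card_inter A B
  have h2 := card_le_univ (A ∪ B)
  have h1' : ((A ∪ B).card : ℝ) + (A ∩ B).card = A.card + B.card := by exact_mod_cast h1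
  have h2' : ((A ∪ B).card : ℝ) ≤ Fintype.card V := by exact_mod_cast h2
  linarith

set_option maxHeartbeats 2000000 in
open Classical in
lemma count7 {V : Type} [Fintype V] [DecidableEq V] {H : Finset (Finset V)} {g d : ℝ}
    (hS : Std H g) (hd : 0 < d) (hdg : d * 10 ≤ g) (hd1 : d ≤ 1 / 8) (W : Finset V)
    (hW : (W.card : ℝ) + 7 ≤ d * Fintype.card V / 2) (x y : V)
    (hxy : d * Fintype.card V ≤
      ((Big H (d * Fintype.card V) x ∩ Big H ((3 / 8 + d) * Fintype.card V) y).card : ℝ)) :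
    (d * Fintype.card V / 2) ^ 7 ≤
      ((univ.filter (fun t : T7 V => Dis t ∧ AbsE H x y t ∧ ∀ z ∈ vs t, z ∉ W)).card : ℝ) := by
  have hA := fun v => card_A hS hd hdg (by linarith) v
  have hB := fun v => card_B hS hd hdg v
  set N := (Fintype.card V : ℝ) with hN
  have hN0 : 0 ≤ N := by positivity
  have hdN : 0 ≤ d * N := by positivity
  have hBig : ∀ s u v, v ∈ Big H s u ↔ s ≤ ((Nb H u v).card : ℝ) := by simp [Big]
  have hNb : ∀ u v w, w ∈ Nb H u v ↔ ({u, v, w} : Finset V) ∈ H := by simp [Nb]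
  have e7 : (d * N / 2) ^ 7 = (d * N / 2) * ((d * N / 2) * ((d * N / 2) * ((d * N / 2) *
    ((d * N / 2) * ((d * N / 2) * (d * N / 2)))))) := by ring
  rw [e7]
  suffices key : ∀ P : T7 V → Prop, (∀ v4 v2 v5 v6 v3 v1 v7, Dis (v4, v2, v5, v6, v3, v1, v7) →
      AbsE H x y (v4, v2, v5, v6, v3, v1, v7) → (∀ z ∈ vs (v4, v2, v5, v6, v3, v1, v7), z ∉ W) →
      P (v4, v2, v5, v6, v3, v1, v7)) →
      (d * N / 2) * ((d * N / 2) * ((d * N / 2) * ((d * N / 2) *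
    ((d * N / 2) * ((d * N / 2) * (d * N / 2)))))) ≤ ((univ.filter P).card : ℝ) by
    have hk := key (fun t : T7 V => Dis t ∧ AbsE H x y t ∧ ∀ z ∈ vs t, z ∉ W)
      (fun v4 v2 v5 v6 v3 v1 v7 h1 h2 h3 => ⟨h1, h2, h3⟩)
    convert hk
  intro P hP
  refine count_step P _ _ _ (pick _ W ∅ _ hxy hW (by simp)) (by positivity) ?_
  intro v4 h4
  simp only [mem_sdiff, mem_union, mem_inter, hBig, not_or] at h4
  refine count_step (fun b => P (v4, b)) _ _ _ (pick (Nb H x v4) W {v4} _ h4.1.1 hW (by simp)) (by positivity) ?_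
  intro v2 h2
  refine count_step (fun b => P (v4, v2, b)) _ _ _ (pick (Big H ((3 / 8 + d) * N) v4) W {v4, v2} _ (hB v4) hW
    (card_le_two.trans (by norm_num))) (by positivity) ?_
  intro v5 h5
  simp only [mem_sdiff, mem_union, hBig, not_or] at h5
  refine count_step (fun b => P (v4, v2, v5, b)) _ _ _ (pick (Nb H y v4 ∩ Big H (d * N) v5) W {v4, v2, v5} _
    (inter_big _ _ _ _ _ h4.1.2 (hA v5) (by linarith)) hW
    (card_le_three.trans (by norm_num))) (by positivity) ?_
  intro v6 h6
  refine count_step (fun b => P (v4, v2, v5, v6, b)) _ _ _ (pick (Nb H v4 v5 ∩ Big H (d * N) v2) W {v4, v2, v5, v6} _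
    (inter_big _ _ _ _ _ h5.1 (hA v2) (by linarith)) hW
    (card_le_four.trans (by norm_num))) (by positivity) ?_
  intro v3 h3
  simp only [mem_sdiff, mem_union, mem_inter, hBig, hNb, not_or] at h2 h6 h3
  refine count_step (fun b => P (v4, v2, v5, v6, v3, b)) _ _ _ (pick (Nb H v2 v3) W {v4, v2, v5, v6, v3} _
    h3.1.2 hW (card_le_five.trans (by norm_num))) (by positivity) ?_
  intro v1 h1
  refine (pick (Nb H v5 v6) W {v4, v2, v5, v6, v3, v1} _
    h6.1.2 hW (card_le_six.trans (by norm_num))).trans ?_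
  refine Nat.cast_le.2 (card_le_card ?_)
  intro v7 h7
  simp only [mem_sdiff, mem_union, mem_inter, hBig, hNb, not_or, mem_insert, mem_singleton] at h1 h2 h3 h5 h6 h7
  rw [mem_filter]
  refine ⟨mem_univ _, hP _ _ _ _ _ _ _ ?_ ⟨h2.1, h6.1.1, h3.1.1, h1.1, h7.1⟩ ?_⟩
  · simp only [Dis, List.nodup_cons, List.mem_cons, List.not_mem_nil, not_or, or_false]
    obtain ⟨-, -, h2⟩ := h2
    obtain ⟨-, -, h5a, h5b⟩ := h5
    obtain ⟨-, -, h6a, h6b, h6c⟩ := h6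
    obtain ⟨-, -, h3a, h3b, h3c, h3d⟩ := h3
    obtain ⟨-, -, h1a, h1b, h1c, h1d, h1e⟩ := h1
    obtain ⟨-, -, h7a, h7b, h7c, h7d, h7e, h7f⟩ := h7
    and_intros
    all_goals first | assumption | exact Ne.symm (by assumption) | simp
  · intro z hz
    simp only [vs, mem_insert, mem_singleton] at hz
    rcases hz with rfl | rfl | rfl | rfl | rfl | rfl | rfl 
    · exact h4.2.1
    · exact h2.2.1
    · exact h5.2.1
    · exact h6.2.1
    · exact h3.2.1
    · exact h1.2.1
    · exact h7.2.1

open Classical in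
lemma countAbs {V : Type} [Fintype V] [DecidableEq V] {H : Finset (Finset V)} {g d : ℝ}
    (hS : Std H g) (hd : 0 < d) (hdg : d * 10 ≤ g) (hd1 : d ≤ 1 / 8) (hN : 0 < Fintype.card V)
    (W : Finset V)
    (hW : (W.card : ℝ) + 7 ≤ d * Fintype.card V / 2) (x y : V) :
    (d * Fintype.card V / 2) ^ 7 ≤
      ((univ.filter (fun t : T7 V => Abs H t x y ∧ ∀ z ∈ vs t, z ∉ W)).card : ℝ) := by
  rcases claim hS hd hdg hd1 hN x y with h | h
  · refine (count7 hS hd hdg hd1 W hW x y h).trans (Nat.cast_le.2 (card_le_card ?_))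
    intro t; rw [mem_filter, mem_filter]; unfold Abs; tauto
  · refine (count7 hS hd hdg hd1 W hW y x h).trans (Nat.cast_le.2 (card_le_card ?_))
    intro t; rw [mem_filter, mem_filter]; unfold Abs; tauto

open Classical in
lemma greedy {V : Type} [Fintype V] [DecidableEq V] {H : Finset (Finset V)} {g d : ℝ}
    (hS : Std H g) (hd : 0 < d) (hdg : d * 10 ≤ g) (hd1 : d ≤ 1 / 8) (hN : 0 < Fintype.card V)
    (W : Finset V)
    (hW : (W.card : ℝ) + 7 ≤ d * Fintype.card V / 2) (w : V × V → ℝ) (hw : ∀ p, 0 < w p) :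
    ∃ t : T7 V, (∃ x y, Abs H t x y) ∧ (∀ z ∈ vs t, z ∉ W) ∧
      (d / 2) ^ 7 * ∑ p, w p ≤ ∑ p ∈ univ.filter (fun p : V × V => Abs H t p.1 p.2), w p := by
  have hN' : (0 : ℝ) < Fintype.card V := by exact_mod_cast hN
  have : Nonempty V := Fintype.card_pos_iff.1 hN
  have hsum : 0 < ∑ p, w p := sum_pos (fun p _ => hw p) univ_nonempty
  have key : ∑ t : T7 V, (d / 2) ^ 7 * ∑ p, w p ≤
      ∑ t : T7 V, ∑ p, if Abs H t p.1 p.2 ∧ ∀ z ∈ vs t, z ∉ W then w p else 0 := by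
    rw [sum_comm]
    have : ∑ t : T7 V, (d / 2) ^ 7 * ∑ p, w p = ∑ p, (d * Fintype.card V / 2) ^ 7 * w p := by
      rw [sum_const, ← mul_sum, nsmul_eq_mul]
      simp only [card_univ, Fintype.card_prod]
      push_cast; ring
    rw [this]
    refine sum_le_sum (fun p _ => ?_)
    rw [← sum_filter, sum_const, nsmul_eq_mul]
    exact mul_le_mul_of_nonneg_right (countAbs hS hd hdg hd1 hN W hW p.1 p.2) (hw p).le
  obtain ⟨t, -, ht⟩ := exists_le_of_sum_le univ_nonempty key
  have hpos : 0 < ∑ p, if Abs H t p.1 p.2 ∧ ∀ z ∈ vs t, z ∉ W then w p else 0 :=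
    lt_of_lt_of_le (by positivity) ht
  obtain ⟨p, -, hp⟩ := exists_ne_zero_of_sum_ne_zero hpos.ne'
  have hp' : Abs H t p.1 p.2 ∧ ∀ z ∈ vs t, z ∉ W := by
    by_contra h; exact hp (if_neg h)
  refine ⟨t, ⟨_, _, hp'.1⟩, hp'.2, ht.trans ?_⟩
  rw [← sum_filter]
  refine sum_le_sum_of_subset_of_nonneg ?_ (fun _ _ _ => (hw _).le)
  intro q; simp only [mem_filter]; tauto

lemma connect {V : Type} [Fintype V] [DecidableEq V] {H : Finset (Finset V)} {g d : ℝ}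
    (hS : Std H g) (hd : 0 < d) (hdg : d * 10 ≤ g) (hd1 : d ≤ 1 / 8)
    (W : Finset V) (hW : (W.card : ℝ) + 7 ≤ d * Fintype.card V / 2) (b c : V) (hb : b ∈ W) (hc : c ∈ W)
    (hbc : b ≠ c) :
    ∃ p q r, p ∉ W ∧ q ∉ W ∧ r ∉ W ∧ Reach H b c {b, p, q, r, c} := by
  have hBig : ∀ s u v, v ∈ Big H s u ↔ s ≤ ((Nb H u v).card : ℝ) := by simp [Big]
  have hNb : ∀ u v w, w ∈ Nb H u v ↔ ({u, v, w} : Finset V) ∈ H := by simp [Nb]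
  have hpos : 0 < d * Fintype.card V / 2 := by
    have : (0:ℝ) ≤ W.card := by positivity
    linarith
  have hd2 : d * Fintype.card V ≤ 1 / 8 * Fintype.card V := by gcongr
  have hex : ∀ C E : Finset V, d * Fintype.card V ≤ C.card → E.card ≤ 7 → ∃ z ∈ C, z ∉ W ∧ z ∉ E := by
    intro C E hC hE
    have h := pick C W E _ hC hW hE
    have h' : 0 < (C \ (W ∪ E)).card := by exact_mod_cast hpos.trans_le h
    obtain ⟨z, hz⟩ := card_pos.1 h'
    simp only [mem_sdiff, mem_union, not_or] at hz
    exact ⟨z, hz⟩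
  obtain ⟨q, hq, hqW, -⟩ := hex (Big H (d * Fintype.card V) b ∩ Big H (d * Fintype.card V) c) ∅
    (inter_big _ _ _ _ _ (card_A hS hd hdg (by linarith) b) (card_A hS hd hdg (by linarith) c)
      (by linarith)) (by simp)
  rw [mem_inter, hBig, hBig] at hq
  obtain ⟨p, hp, hpW, hpE⟩ := hex (Nb H b q) {q} hq.1 (by simp)
  obtain ⟨r, hr, hrW, hrE⟩ := hex (Nb H c q) {q, p} hq.2 (card_le_two.trans (by norm_num))
  rw [hNb] at hp hr
  simp only [mem_insert, mem_singleton, not_or] at hpE hrE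
  refine ⟨p, q, r, hpW, hqW, hrW, ?_⟩
  have ne : ∀ {u v : V}, u ∈ W → v ∉ W → u ≠ v := fun hu hv h => hv (h ▸ hu)
  have r1 := Reach.edge q r c ((perm3 c q r).2.2.2.1 ▸ hr) (ne hc hqW).symm (Ne.symm hrE.1) (ne hc hrW).symm
  have n1 := ne hb hpW
  have n2 := ne hb hqW
  have n3 := ne hb hrW
  have n4 := ne hc hpW
  have r2 := Reach.cons b p q c _ ((perm3 b q p).2.1 ▸ hp) r1 (by simp; tauto) (by simp; grind) n1
  exact r2

noncomputable instance instDecT7 {V : Type} : DecidableEq (T7 V) := Classical.decEq _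

lemma st_mem {V : Type} [DecidableEq V] (t : T7 V) : st t ∈ vs t := by
  obtain ⟨v4, v2, v5, v6, v3, v1, v7⟩ := t; simp [st, vs]

lemma en_mem {V : Type} [DecidableEq V] (t : T7 V) : en t ∈ vs t := by
  obtain ⟨v4, v2, v5, v6, v3, v1, v7⟩ := t; simp [en, vs]

lemma vs_card {V : Type} [DecidableEq V] (t : T7 V) : (vs t).card ≤ 7 := by
  obtain ⟨v4, v2, v5, v6, v3, v1, v7⟩ := t
  simp only [vs]
  exact (card_insert_le _ _).trans (Nat.succ_le_succ card_le_six)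

def pr {V : Type} [DecidableEq V] (p : V × V) : Finset V := {p.1, p.2}

def Good {V : Type} [DecidableEq V] (H : Finset (Finset V)) (a b : V) (S : Finset V)
    (F : Finset (T7 V)) : Prop :=
  ∀ D ⊆ F, ∀ g : T7 V → V × V, (∀ t ∈ D, Abs H t (g t).1 (g t).2) →
    (∀ t ∈ D, (g t).1 ≠ (g t).2) → (∀ t ∈ D, ∀ z ∈ pr (g t), z ∉ S) →
    (∀ t ∈ D, ∀ t' ∈ D, t ≠ t' → ∀ z ∈ pr (g t), z ∉ pr (g t')) →
    Reach H a b (S ∪ D.biUnion (fun t => pr (g t)))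

lemma Good.ext {V : Type} [DecidableEq V] {H : Finset (Finset V)} {a b : V} {S : Finset V}
    {F : Finset (T7 V)} (hG : Good H a b S F) {t : T7 V} (ht : ∃ x y, Abs H t x y)
    (htS : ∀ z ∈ vs t, z ∉ S) {p q r : V} (hp : p ∉ S ∪ vs t) (hq : q ∉ S ∪ vs t)
    (hr : r ∉ S ∪ vs t) (R1 : Reach H b (st t) {b, p, q, r, st t}) (hb : b ∈ S) :
    Good H a (en t) (S ∪ ({b, p, q, r, st t} ∪ vs t)) (insert t F) := by
  intro D hD g h1 h2 h3 h4
  set X : Finset V := if t ∈ D then pr (g t) else ∅ with hX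
  set Y : Finset V := (D.erase t).biUnion (fun t => pr (g t)) with hY
  have hst : st t ∈ vs t := st_mem t
  have R0 : Reach H a b (S ∪ Y) := by
    refine hG (D.erase t) ?_ g (fun t' ht' => h1 t' (mem_of_mem_erase ht'))
      (fun t' ht' => h2 t' (mem_of_mem_erase ht')) (fun t' ht' z hz hzS => h3 t' (mem_of_mem_erase ht') z hz
        (mem_union_left _ hzS)) (fun t1 ht1 t2 ht2 => h4 t1 (mem_of_mem_erase ht1) t2 (mem_of_mem_erase ht2))
    intro t' ht'
    rw [mem_erase] at ht'
    have := hD ht'.2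
    rw [mem_insert] at this
    exact this.resolve_left ht'.1
  have hXS : ∀ z ∈ X, z ∉ S ∪ ({b, p, q, r, st t} ∪ vs t) := by
    intro z hz
    by_cases htD : t ∈ D
    · rw [hX, if_pos htD] at hz; exact h3 t htD z hz
    · rw [hX, if_neg htD] at hz; simp at hz
  have hYS : ∀ z ∈ Y, z ∉ S ∪ ({b, p, q, r, st t} ∪ vs t) := by
    intro z hz
    rw [hY, mem_biUnion] at hz
    obtain ⟨t', ht', hz⟩ := hz
    exact h3 t' (mem_of_mem_erase ht') z hz
  have hXY : ∀ z ∈ X, z ∉ Y := by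
    intro z hz hzY
    rw [hY, mem_biUnion] at hzY
    obtain ⟨t', ht', hz'⟩ := hzY
    by_cases htD : t ∈ D
    · rw [hX, if_pos htD] at hz
      exact h4 t htD t' (mem_of_mem_erase ht') (mem_erase.1 ht').1.symm z hz hz'
    · rw [hX, if_neg htD] at hz; simp at hz
  have hUn : D.biUnion (fun t => pr (g t)) = X ∪ Y := by
    by_cases htD : t ∈ D
    · rw [hX, if_pos htD, hY]
      conv_lhs => rw [← insert_erase htD]
      rw [biUnion_insert]
    · rw [hX, if_neg htD, hY, erase_eq_of_notMem htD, empty_union]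
  have R2 : Reach H (st t) (en t) (vs t ∪ X) := by
    by_cases htD : t ∈ D
    · rw [hX, if_pos htD]
      have hh := h3 t htD
      refine (h1 t htD).reach1 (h2 t htD) ?_ ?_
      · have := hh (g t).1 (by simp [pr]); simp only [mem_union, not_or] at this; exact this.2.2
      · have := hh (g t).2 (by simp [pr]); simp only [mem_union, not_or] at this; exact this.2.2
    · obtain ⟨x, y, hxy⟩ := ht
      rw [hX, if_neg htD, union_empty]; exact hxy.reach0
  have hbt : b ∉ vs t := fun h => htS b h hb
  simp only [mem_union, not_or] at hp hq hr
  have R3 := R1.trans R2 (by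
    intro z hz hz2
    rw [mem_union] at hz2
    rcases hz2 with hz2 | hz2
    · simp only [mem_insert, mem_singleton] at hz
      rcases hz with rfl | rfl | rfl | rfl | rfl
      · exact absurd hz2 hbt
      · exact absurd hz2 hp.2
      · exact absurd hz2 hq.2
      · exact absurd hz2 hr.2
      · rfl
    · exact absurd (mem_union_right _ (mem_union_left _ hz)) (hXS z hz2))
  have R4 := R0.trans R3 (by
    intro z hz hz2
    rw [mem_union] at hz
    rcases hz with hz | hz
    · rw [mem_union, mem_union] at hz2
      rcases hz2 with hz2 | hz2 | hz2
      · simp only [mem_insert, mem_singleton] at hz2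
        rcases hz2 with rfl | rfl | rfl | rfl | rfl
        · rfl
        · exact absurd hz hp.1
        · exact absurd hz hq.1
        · exact absurd hz hr.1
        · exact absurd hz (htS _ hst)
      · exact absurd hz (htS _ hz2)
      · exact absurd (mem_union_left _ hz) (hXS z hz2)
    · have h5 := hYS z hz
      rw [← union_assoc, mem_union] at hz2
      rcases hz2 with hz2 | hz2
      · exact absurd (mem_union_right _ hz2) h5
      · exact absurd hz (hXY z hz2))
  refine R4.congr ?_
  rw [hUn]
  clear_value X Y
  ac_rfl

open Classical in
noncomputable def hits {V : Type} [DecidableEq V] (H : Finset (Finset V)) (F : Finset (T7 V))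
    (p : V × V) : ℕ := (F.filter (fun t => Abs H t p.1 p.2)).card

lemma iterate {V : Type} [Fintype V] [DecidableEq V] {H : Finset (Finset V)} {g d : ℝ}
    (h3 : ∀ e ∈ H, e.card = 3)
    (hS : Std H g) (hd : 0 < d) (hdg : d * 10 ≤ g) (hd1 : d ≤ 1 / 8) (hN : 0 < Fintype.card V)
    (m : ℕ) (hm : 10 * (m : ℝ) + 17 ≤ d * Fintype.card V / 2) :
    ∃ (a b : V) (S : Finset V) (F : Finset (T7 V)), Good H a b S F ∧ b ∈ S ∧ (∀ t ∈ F, vs t ⊆ S) ∧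
      S.card ≤ 10 * m + 3 ∧
      ∑ p : V × V, ((1 : ℝ) / 2) ^ hits H F p ≤
        (Fintype.card V : ℝ) ^ 2 * (1 - (d / 2) ^ 7 / 2) ^ m := by
  classical
  have hN' : (0 : ℝ) < Fintype.card V := by exact_mod_cast hN
  induction m with
  | zero =>
    have : Nonempty V := Fintype.card_pos_iff.1 hN
    obtain ⟨v⟩ := this
    have hA := card_A hS hd hdg (by linarith) v
    have hA0 : 0 < (Big H (d * Fintype.card V) v).card := by
      have : 0 < (5 / 8 + d) * (Fintype.card V : ℝ) := by positivity
      exact_mod_cast this.trans_le hA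
    obtain ⟨w, hw⟩ := card_pos.1 hA0
    have hw : d * Fintype.card V ≤ ((Nb H v w).card : ℝ) := by simpa [Big] using hw
    have hw0 : 0 < (Nb H v w).card := by
      have : 0 < d * (Fintype.card V : ℝ) := by positivity
      exact_mod_cast this.trans_le hw
    obtain ⟨u, hu⟩ := card_pos.1 hw0
    have hu : ({v, w, u} : Finset V) ∈ H := by simpa [Nb] using hu
    have hc := h3 _ hu
    have n1 : v ≠ w := by
      rintro rfl
      have := card_le_two (a := v) (b := u)
      rw [insert_eq_of_mem (mem_insert_self _ _)] at hc
      omega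
    have n2 : v ≠ u := by
      rintro rfl
      have := card_le_two (a := w) (b := v)
      rw [insert_eq_of_mem (mem_insert_of_mem (mem_singleton_self _))] at hc
      omega
    have n3 : w ≠ u := by
      rintro rfl
      have := card_le_two (a := v) (b := w)
      rw [insert_eq_of_mem (mem_singleton_self w)] at hc
      omega
    refine ⟨v, u, {v, w, u}, ∅, ?_, by simp, by simp, by simp [hc], ?_⟩
    · intro D hD g _ _ _ _
      rw [subset_empty] at hD
      subst hD
      simpa using Reach.edge v w u hu n2 n1 n3
    · simp [hits, pow_two]
  | succ m ih =>
    push_cast at hm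
    obtain ⟨a, b, S, F, hG, hb, hF, hSc, hsum⟩ := ih (by linarith)
    have hSc' : (S.card : ℝ) ≤ 10 * m + 3 := by exact_mod_cast hSc
    obtain ⟨t, ht, htS, hw⟩ := greedy hS hd hdg hd1 hN S (by linarith)
      (fun p => ((1 : ℝ) / 2) ^ hits H F p) (fun p => by positivity)
    have hvc := vs_card t
    have hst := st_mem t
    have hen := en_mem t
    have huc := card_union_le S (vs t)
    have huc' : ((S ∪ vs t).card : ℝ) ≤ 10 * m + 10 := by
      have : (S ∪ vs t).card ≤ 10 * m + 10 := by omega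
      exact_mod_cast this
    obtain ⟨p, q, r, hp, hq, hr, R1⟩ := connect hS hd hdg hd1 (S ∪ vs t) (by linarith) b (st t)
      (mem_union_left _ hb) (mem_union_right _ hst) (fun h => htS _ hst (h ▸ hb))
    refine ⟨a, en t, S ∪ ({b, p, q, r, st t} ∪ vs t), insert t F, hG.ext ht htS hp hq hr R1 hb,
      ?_, ?_, ?_, ?_⟩
    · exact mem_union_right _ (mem_union_right _ hen)
    · intro t' ht'
      rw [mem_insert] at ht'
      rcases ht' with rfl | ht'
      · exact fun z hz => mem_union_right _ (mem_union_right _ hz)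
      · exact fun z hz => mem_union_left _ (hF t' ht' hz)
    · have : S ∪ ({b, p, q, r, st t} ∪ vs t) ⊆ (S ∪ vs t) ∪ {p, q, r} := by
        intro z hz
        simp only [mem_union, mem_insert, mem_singleton] at hz ⊢
        rcases hz with hz | (rfl | hz | hz | hz | rfl) | hz <;> simp [*]
      have h1 := card_le_card this
      have h2 := card_union_le (S ∪ vs t) {p, q, r}
      have h4 : ({p, q, r} : Finset V).card ≤ 3 := card_le_three
      omega
    · have htF : t ∉ F := fun h => htS _ hst (hF t h hst)
      have hh : ∀ p : V × V, ((1 : ℝ) / 2) ^ hits H (insert t F) p =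
          ((1 : ℝ) / 2) ^ hits H F p - (if Abs H t p.1 p.2 then ((1 : ℝ) / 2) ^ hits H F p else 0) / 2 := by
        intro p
        unfold hits
        rw [filter_insert]
        split_ifs with hA
        · rw [card_insert_of_notMem (by simp [htF]), pow_succ]; ring
        · ring
      rw [sum_congr rfl (fun p _ => hh p), sum_sub_distrib, ← sum_div, ← sum_filter]
      have hk : (d / 2) ^ 7 ≤ 1 := pow_le_one₀ (by positivity) (by linarith)
      calc _ ≤ (1 - (d / 2) ^ 7 / 2) * ∑ p : V × V, ((1 : ℝ) / 2) ^ hits H F p := by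
            have : (d / 2) ^ 7 * ∑ p : V × V, ((1 : ℝ) / 2) ^ hits H F p ≤
              ∑ p ∈ univ.filter (fun p : V × V => Abs H t p.1 p.2), ((1 : ℝ) / 2) ^ hits H F p := by
              convert hw
            linarith
        _ ≤ (1 - (d / 2) ^ 7 / 2) * ((Fintype.card V : ℝ) ^ 2 * (1 - (d / 2) ^ 7 / 2) ^ m) := by
            refine mul_le_mul_of_nonneg_left hsum (by linarith)
        _ = _ := by rw [pow_succ]; ring

lemma assign {V : Type} [DecidableEq V] {H : Finset (Finset V)} {F : Finset (T7 V)} (r : ℕ) :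
    ∀ U : Finset V, U.card = 2 * r → (∀ p : V × V, r ≤ hits H F p) →
    ∃ D ⊆ F, D.card = r ∧ ∃ g : T7 V → V × V, (∀ t ∈ D, Abs H t (g t).1 (g t).2) ∧
      (∀ t ∈ D, (g t).1 ≠ (g t).2) ∧
      (∀ t ∈ D, ∀ t' ∈ D, t ≠ t' → ∀ z ∈ pr (g t), z ∉ pr (g t')) ∧
      D.biUnion (fun t => pr (g t)) = U := by
  classical
  induction r with
  | zero =>
    intro U hU _
    have : U = ∅ := by simpa using hU
    subst this
    by_cases hne : Nonempty V
    · obtain ⟨v⟩ := hne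
      exact ⟨∅, by simp, by simp, fun _ => (v, v), by simp, by simp, by simp, by simp⟩
    · exact ⟨∅, by simp, by simp, fun t => absurd ⟨t.1⟩ hne, by simp, by simp, by simp, by simp⟩
  | succ r ih =>
    intro U hU hF
    obtain ⟨x, hx⟩ : U.Nonempty := card_pos.1 (by omega)
    have c1 := card_erase_of_mem hx
    obtain ⟨y, hy⟩ : (U.erase x).Nonempty := card_pos.1 (by omega)
    have c2 := card_erase_of_mem hy
    obtain ⟨D, hD, hDc, g, g1, g2, g3, g4⟩ := ih ((U.erase x).erase y) (by omega)
      (fun p => (Nat.le_succ r).trans (hF p))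
    have : ∃ t ∈ F.filter (fun t => Abs H t x y), t ∉ D := by
      apply exists_mem_notMem_of_card_lt_card
      have := hF (x, y)
      unfold hits at this
      rw [hDc]; exact Nat.lt_of_succ_le (by convert this)
    obtain ⟨t, ht, htD⟩ := this
    rw [mem_filter] at ht
    rw [mem_erase] at hy
    have hpr : ∀ t' ∈ D, ∀ z ∈ pr (g t'), z ≠ x ∧ z ≠ y := by
      intro t' ht' z hz
      have : z ∈ (U.erase x).erase y := by
        rw [← g4]; exact mem_biUnion.2 ⟨t', ht', hz⟩
      rw [mem_erase, mem_erase] at this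
      exact ⟨this.2.1, this.1⟩
    have hupd : ∀ t' ∈ D, Function.update g t (x, y) t' = g t' := by
      intro t' ht'
      have hne : t' ≠ t := by rintro rfl; exact htD ht'
      exact Function.update_of_ne hne _ _
    refine ⟨insert t D, ?_, ?_, Function.update g t (x, y), ?_, ?_, ?_, ?_⟩
    · exact insert_subset ht.1 hD
    · rw [card_insert_of_notMem htD, hDc]
    · intro t' ht'
      rw [mem_insert] at ht'
      rcases ht' with rfl | ht'
      · simpa using ht.2
      · rw [hupd t' ht']; exact g1 t' ht'
    · intro t' ht'
      rw [mem_insert] at ht'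
      rcases ht' with rfl | ht'
      · simpa using hy.1.symm
      · rw [hupd t' ht']; exact g2 t' ht'
    · intro t1 ht1 t2 ht2 hne z hz
      rw [mem_insert] at ht1 ht2
      rcases ht1 with rfl | ht1 <;> rcases ht2 with rfl | ht2
      · exact absurd rfl hne
      · rw [hupd t2 ht2]
        intro hz2
        have := hpr t2 ht2 z hz2
        simp [pr] at hz
        tauto
      · rw [hupd t1 ht1] at hz
        have := hpr t1 ht1 z hz
        simp [pr]
        tauto
      · rw [hupd t1 ht1] at hz
        rw [hupd t2 ht2]
        exact g3 t1 ht1 t2 ht2 hne z hz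
    · rw [biUnion_insert, Function.update_self]
      have : D.biUnion (fun t' => pr (Function.update g t (x, y) t')) = (U.erase x).erase y := by
        rw [← g4]
        exact biUnion_congr rfl (fun t' ht' => by rw [hupd t' ht'])
      rw [this]
      ext z
      simp only [pr, mem_union, mem_insert, mem_singleton, mem_erase]
      constructor
      · rintro ((rfl | rfl) | h)
        · exact hx
        · exact hy.2
        · exact h.2.2
      · intro h
        by_cases z = x <;> by_cases z = y <;> tauto

lemma std_of {V : Type} [Fintype V] [DecidableEq V] {H : Finset (Finset V)} {γ : ℝ} (hγ : 0 < γ)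
    (h3 : ∀ e ∈ H, e.card = 3)
    (hn : (5 / 8 + γ) ^ 2 ≤ γ / 4 * Fintype.card V)
    (hdeg : ∀ v : V, (5 / 8 + γ) ^ 2 * ((Fintype.card V).choose 2 : ℝ) ≤
        ((H.filter (fun e => v ∈ e)).card : ℝ)) : Std H γ := by
  intro v
  have h1 := hdeg v
  have h2 : 2 * ((H.filter (fun e => v ∈ e)).card : ℝ) ≤ ∑ w, ((Nb H v w).card : ℝ) := by
    exact_mod_cast sum_Nb H h3 v
  rw [Nat.cast_choose_two] at h1
  set N := (Fintype.card V : ℝ)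
  have hN : 0 ≤ N := by positivity
  have h4 : (5 / 8 + γ) ^ 2 * N ≤ γ / 4 * N * N := mul_le_mul_of_nonneg_right hn hN
  nlinarith [mul_nonneg (sq_nonneg γ) (sq_nonneg N)]

lemma hits_lb {h m : ℕ} {N k : ℝ} (hN : 0 < N) (hk : k ≤ 2)
    (hh : ((1 : ℝ) / 2) ^ h ≤ N ^ 2 * (1 - k / 2) ^ m) : k / 2 * m - 2 * Real.log N ≤ h := by
  have h1 : Real.exp (-(h : ℝ)) ≤ ((1 : ℝ) / 2) ^ h := by
    have : Real.exp (-1) ≤ 1 / 2 := by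
      rw [Real.exp_neg, one_div]
      apply inv_anti₀ (by norm_num)
      have := Real.add_one_le_exp (1 : ℝ); linarith
    calc Real.exp (-(h : ℝ)) = Real.exp (-1) ^ h := by rw [← Real.exp_nat_mul]; congr 1; ring
      _ ≤ _ := by gcongr
  have h2 : (1 - k / 2) ^ m ≤ Real.exp (-(k / 2 * m)) := by
    calc (1 - k / 2) ^ m ≤ Real.exp (-(k / 2)) ^ m := by
          apply pow_le_pow_left₀ (by linarith)
          have := Real.add_one_le_exp (-(k / 2)); linarith
      _ = _ := by rw [← Real.exp_nat_mul]; congr 1; ring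
  have h3 : N ^ 2 = Real.exp (2 * Real.log N) := by
    rw [two_mul, Real.exp_add, Real.exp_log hN]; ring
  have h4 : Real.exp (-(h : ℝ)) ≤ Real.exp (2 * Real.log N - k / 2 * m) := by
    rw [sub_eq_add_neg, Real.exp_add, ← h3]
    exact (h1.trans hh).trans (by gcongr)
  have := Real.exp_le_exp.1 h4
  linarith

end AbsAux

open AbsAux in
theorem absorbing_lemma (γ : ℝ) (hγ : 0 < γ) :
    ∃ β : ℝ, 0 < β ∧ ∃ n₀ : ℕ,
      ∀ (V : Type) [Fintype V] [DecidableEq V], ∀ (H : Finset (Finset V)) (n : ℕ),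
      Fintype.card V = n → n₀ < n →
      (∀ e ∈ H, e.card = 3) →
      (∀ v : V, (5 / 8 + γ) ^ 2 * (n.choose 2 : ℝ) ≤
        ((H.filter (fun e => v ∈ e)).card : ℝ)) →
      ∃ (k : ℕ) (f : ℕ → V), IsLoosePath H k f ∧
        ((2 * k + 1 : ℕ) : ℝ) ≤ γ ^ 7 * n ∧
        ∀ U : Finset V, Disjoint U (pathVerts k f) → (U.card : ℝ) ≤ β * n →
          Even U.card →
          ∃ (k' : ℕ) (f' : ℕ → V), IsLoosePath H k' f' ∧
            pathVerts k' f' = pathVerts k f ∪ U ∧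
            ({f' 0, f' (2 * k')} : Finset V) = {f 0, f (2 * k)} := by
  obtain ⟨d, hd, hd10, hd8⟩ : ∃ d : ℝ, 0 < d ∧ d * 10 ≤ γ ∧ d ≤ 1 / 8 :=
    ⟨min (γ / 10) (1 / 8), by positivity, by linarith [min_le_left (γ / 10) (1 / 8)], min_le_right _ _⟩
  set κ := (d / 2) ^ 7 with hκ
  have hκ0 : 0 < κ := by positivity
  have hκ1 : κ ≤ 1 := pow_le_one₀ (by positivity) (by linarith)
  obtain ⟨ε, hε, hε1, hε2⟩ : ∃ ε : ℝ, 0 < ε ∧ ε * 40 ≤ d ∧ ε * 20 ≤ γ ^ 7 :=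
    ⟨min (d / 40) (γ ^ 7 / 20), by positivity, by linarith [min_le_left (d / 40) (γ ^ 7 / 20)],
      by linarith [min_le_right (d / 40) (γ ^ 7 / 20)]⟩
  have hlog : ∀ᶠ x : ℝ in Filter.atTop, Real.log x ≤ κ * ε / 16 * x := by
    have := Real.isLittleO_log_id_atTop.bound (show 0 < κ * ε / 16 by positivity)
    filter_upwards [this, Filter.eventually_ge_atTop 1] with x hx hx1
    have h2 : ‖id x‖ = x := by simp; linarith
    rw [h2] at hx
    exact (le_abs_self _).trans hx
  obtain ⟨M, hM⟩ := Filter.eventually_atTop.1 hlog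
  have hbig : ∀ᶠ x : ℝ in Filter.atTop, M ≤ x ∧ 4 * (5 / 8 + γ) ^ 2 / γ ≤ x ∧ 68 / d ≤ x ∧
      6 / γ ^ 7 ≤ x ∧ 4 / ε ≤ x := by
    simp only [Filter.eventually_and, Filter.eventually_ge_atTop, and_self]
  obtain ⟨M', hM'⟩ := Filter.eventually_atTop.1 hbig
  refine ⟨κ * ε / 8, by positivity, ⌈M'⌉₊, ?_⟩
  intro V _ _ H n hn hn0 h3 hdeg
  subst hn
  set N := (Fintype.card V : ℝ) with hN
  have hnM : M' ≤ N := (Nat.le_ceil _).trans (by rw [hN]; exact_mod_cast hn0.le)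
  obtain ⟨b1, b2, b3, b4, b5⟩ := hM' N hnM
  have hcard : 0 < Fintype.card V := by omega
  have hN0 : 0 < N := by rw [hN]; exact_mod_cast hcard
  rw [div_le_iff₀ (by positivity)] at b2 b3 b4 b5
  have hlogN := hM N b1
  have hS : Std H γ := std_of hγ h3 (by linarith) hdeg
  set m := ⌊ε * N⌋₊ with hm
  have hm1 : (m : ℝ) ≤ ε * N := Nat.floor_le (by positivity)
  have hm2 : ε * N - 1 ≤ m := (Nat.sub_one_lt_floor _).le
  have hεN : ε * N * 40 ≤ d * N := by nlinarith
  have hεN2 : ε * N * 20 ≤ γ ^ 7 * N := by nlinarith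
  obtain ⟨a, b, S, F, hG, hb, hF, hSc, hsum⟩ := iterate h3 hS hd hd10 hd8 hcard m (by linarith)
  have hSc' : (S.card : ℝ) ≤ 10 * m + 3 := by exact_mod_cast hSc
  have hhits : ∀ p : V × V, κ * ε / 8 * N ≤ (hits H F p : ℝ) := by
    intro p
    have h1 : ((1 : ℝ) / 2) ^ hits H F p ≤ N ^ 2 * (1 - κ / 2) ^ m :=
      (single_le_sum (f := fun p : V × V => ((1 : ℝ) / 2) ^ hits H F p) (fun _ _ => by positivity)
        (mem_univ p)).trans hsum
    have h2 := hits_lb hN0 (by linarith) h1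
    have h4 : κ / 2 * (ε * N - 1) ≤ κ / 2 * m := by gcongr
    have h5 : κ * 4 ≤ κ * (N * ε) := by gcongr
    linarith
  have R0 : Reach H a b S := by
    have := hG ∅ (by simp) (fun _ => (a, a)) (by simp) (by simp) (by simp) (by simp)
    simpa using this
  obtain ⟨k, f, hf, hfS, hf0, hfk⟩ := R0.toPath
  have hcardS : S.card = 2 * k + 1 := by
    rw [← hfS, pathVerts, card_image_of_injOn, card_range]
    intro i hi j hj
    simp only [coe_range, Set.mem_Iio] at hi hj
    exact hf.2.1 i (by omega) j (by omega)
  refine ⟨k, f, hf, ?_, ?_⟩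
  · rw [← hcardS]; linarith
  · intro U hU hUc hUe
    obtain ⟨r, hr⟩ := hUe
    obtain ⟨D, hD, -, g, g1, g2, g3, g4⟩ := assign (H := H) (F := F) r U (by omega) (by
      intro p
      have h1 := hhits p
      have h2 : (r : ℝ) ≤ U.card := by rw [hr]; exact_mod_cast Nat.le_add_right r r
      exact_mod_cast (h2.trans hUc).trans h1)
    rw [hfS] at hU ⊢
    have R := hG D hD g g1 g2 (by
      intro t ht z hz hzS
      have : z ∈ U := by rw [← g4]; exact mem_biUnion.2 ⟨t, ht, hz⟩
      exact Finset.disjoint_left.1 hU this hzS) g3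
    rw [g4] at R
    obtain ⟨k', f', hf', hfS', hf0', hfk'⟩ := R.toPath
    exact ⟨k', f', hf', hfS', by rw [hf0', hfk', hf0, hfk]⟩
end

section
/- For every γ ∈ (0, 3/8) there exists n₀ such that the following holds. Suppose H=(V,E) is a 3-uniform hypergraph on n > n₀ vertices with δ₁(H) ≥ (5/8 + γ)²·C(n,2). Then for every pair of vertices x, y ∈ V the number of 7-tuples absorbing x and y is at least (γn)⁷/8. -/
open Finset

/-- The `7`-tuple `(v 0, …, v 6)` of distinct vertices absorbs the pair `x, y`:
`{v 0, v 1, v 2}`, `{v 2, v 3, v 4}`, `{v 4, v 5, v 6}` are edges of `H` and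
`{v 1, x, v 3}`, `{v 3, y, v 5}` are edges of `H`. -/
def AbsorbsPair {V : Type} [DecidableEq V] (H : Finset (Finset V)) (v : Fin 7 → V)
    (x y : V) : Prop :=
  Function.Injective v ∧
  ({v 0, v 1, v 2} : Finset V) ∈ H ∧ ({v 2, v 3, v 4} : Finset V) ∈ H ∧
  ({v 4, v 5, v 6} : Finset V) ∈ H ∧
  ({v 1, x, v 3} : Finset V) ∈ H ∧ ({v 3, y, v 5} : Finset V) ∈ H

section Aux
variable {V : Type} [Fintype V] [DecidableEq V]

lemma aux_touch (g : V → V → ℝ) (h1 : ∀ a b, g a b ≤ 1)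
    (hs : ∀ a b, g a b = g b a) (h0 : ∀ a b, 0 ≤ g a b) (S : Finset V) :
    ∑ a, ∑ b, g a b ≤ 2 * ∑ a ∈ S, ∑ b, g a b + ((Fintype.card V : ℝ) - S.card) ^ 2 := by
  have e1 : ∑ a, ∑ b, g a b = ∑ a ∈ S, ∑ b, g a b + ∑ a ∈ Sᶜ, ∑ b, g a b :=
    (Finset.sum_add_sum_compl S _).symm
  have e2 : ∑ a ∈ Sᶜ, ∑ b, g a b = ∑ a ∈ Sᶜ, ∑ b ∈ S, g a b + ∑ a ∈ Sᶜ, ∑ b ∈ Sᶜ, g a b := by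
    rw [← Finset.sum_add_distrib]
    exact Finset.sum_congr rfl fun a _ => (Finset.sum_add_sum_compl S _).symm
  have e3 : ∑ a ∈ Sᶜ, ∑ b ∈ S, g a b ≤ ∑ a ∈ S, ∑ b, g a b := by
    rw [Finset.sum_comm]
    refine Finset.sum_le_sum fun a _ => ?_
    rw [Finset.sum_congr rfl fun b _ => hs b a]
    exact Finset.sum_le_sum_of_subset_of_nonneg (Finset.subset_univ _) fun b _ _ => h0 a b
  have e4 : ∑ a ∈ Sᶜ, ∑ b ∈ Sᶜ, g a b ≤ ((Fintype.card V : ℝ) - S.card) ^ 2 := by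
    have hc : ((Sᶜ.card : ℕ) : ℝ) = (Fintype.card V : ℝ) - S.card := by
      rw [Finset.card_compl, Nat.cast_sub (Finset.card_le_univ S)]
    calc _ ≤ ∑ a ∈ Sᶜ, ∑ b ∈ Sᶜ, (1 : ℝ) :=
          Finset.sum_le_sum fun a _ => Finset.sum_le_sum fun b _ => h1 a b
      _ = _ := by simp only [Finset.sum_const, nsmul_eq_mul, hc]; ring
  linarith

lemma aux_R (f g : V → V → ℝ) (f1 : ∀ a b, f a b ≤ 1) (fs : ∀ a b, f a b = f b a)
    (f0 : ∀ a b, 0 ≤ f a b) (g1 : ∀ a b, g a b ≤ 1) (gs : ∀ a b, g a b = g b a)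
    (g0 : ∀ a b, 0 ≤ g a b) (n : ℝ) (hn : n = Fintype.card V)
    (hf : 25 / 64 * n ^ 2 ≤ ∑ a, ∑ b, f a b) (hg : 25 / 64 * n ^ 2 ≤ ∑ a, ∑ b, g a b) :
    (9 / 128) ^ 2 * n ^ 3 ≤ ∑ u, (∑ b, f u b) * (∑ b, g u b) := by
  have hn0 : 0 ≤ n := by rw [hn]; positivity
  set U : Finset V := Finset.univ.filter (fun u => 9 / 128 * n ≤ ∑ b, g u b) with hU
  have hUn : (U.card : ℝ) ≤ n := by rw [hn]; exact_mod_cast Finset.card_le_univ U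
  have hc : ((Uᶜ.card : ℕ) : ℝ) = n - U.card := by
    rw [Finset.card_compl, Nat.cast_sub (Finset.card_le_univ U), hn]
  have t1 := aux_touch g g1 gs g0 Uᶜ
  have t2 : ∑ a ∈ Uᶜ, ∑ b, g a b ≤ 9 / 128 * n * n := by
    calc _ ≤ ∑ a ∈ Uᶜ, 9 / 128 * n := Finset.sum_le_sum fun a ha => by
            simp [hU] at ha; linarith
      _ = (n - U.card) * (9 / 128 * n) := by rw [Finset.sum_const, nsmul_eq_mul, hc]
      _ ≤ _ := by
        have : (0 : ℝ) ≤ U.card := by positivity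
        nlinarith
  rw [hc, ← hn] at t1
  have hU2 : n / 2 ≤ U.card := by
    have : (0 : ℝ) ≤ U.card := by positivity
    by_contra hcon
    push Not at hcon
    nlinarith
  have t3 := aux_touch f f1 fs f0 U
  rw [← hn] at t3
  have t4 : 9 / 128 * n ^ 2 ≤ ∑ a ∈ U, ∑ b, f a b := by nlinarith
  calc (9 / 128) ^ 2 * n ^ 3 ≤ (∑ a ∈ U, ∑ b, f a b) * (9 / 128 * n) := by nlinarith
    _ = ∑ u ∈ U, (∑ b, f u b) * (9 / 128 * n) := by rw [Finset.sum_mul]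
    _ ≤ ∑ u ∈ U, (∑ b, f u b) * (∑ b, g u b) := by
      refine Finset.sum_le_sum fun u hu => ?_
      refine mul_le_mul_of_nonneg_left ?_ (Finset.sum_nonneg fun b _ => f0 u b)
      simpa [hU] using hu
    _ ≤ _ := Finset.sum_le_sum_of_subset_of_nonneg (Finset.subset_univ _) fun u _ _ =>
      mul_nonneg (Finset.sum_nonneg fun b _ => f0 u b) (Finset.sum_nonneg fun b _ => g0 u b)

lemma aux_M (g : V → V → ℝ) (h1 : ∀ a b, g a b ≤ 1)
    (hs : ∀ a b, g a b = g b a) (h0 : ∀ a b, 0 ≤ g a b) (n : ℝ) (hn : n = Fintype.card V)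
    (A B : Finset V) (hA : ∀ a, a ∈ A ↔ 3 / 8 * n ≤ ∑ b, g a b) (hAB : A.card ≤ B.card) :
    ∑ a, ∑ b, g a b ≤ 25 / 64 * n ^ 2 + 3 * ∑ a ∈ B, ∑ b, g a b := by
  have hn0 : 0 ≤ n := by rw [hn]; positivity
  have d0 : ∀ a, 0 ≤ ∑ b, g a b := fun a => Finset.sum_nonneg fun b _ => h0 a b
  set M := ∑ a ∈ B, ∑ b, g a b with hM
  have e1 : ∑ a, ∑ b, g a b = ∑ a ∈ A, ∑ b, g a b + ∑ a ∈ Aᶜ, ∑ b, g a b :=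
    (Finset.sum_add_sum_compl A _).symm
  have e2 : ∑ a ∈ A, ∑ b, g a b = ∑ a ∈ A, ∑ b ∈ B, g a b + ∑ a ∈ A, ∑ b ∈ Bᶜ, g a b := by
    rw [← Finset.sum_add_distrib]
    exact Finset.sum_congr rfl fun a _ => (Finset.sum_add_sum_compl B _).symm
  have e3 : ∑ a ∈ A, ∑ b ∈ B, g a b ≤ M := by
    rw [Finset.sum_comm]
    refine Finset.sum_le_sum fun a _ => ?_
    rw [Finset.sum_congr rfl fun b _ => hs b a]
    exact Finset.sum_le_sum_of_subset_of_nonneg (Finset.subset_univ _) fun b _ _ => h0 a b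
  have hcB : ((Bᶜ.card : ℕ) : ℝ) = n - B.card := by
    rw [Finset.card_compl, Nat.cast_sub (Finset.card_le_univ B), hn]
  have e4 : ∑ a ∈ A, ∑ b ∈ Bᶜ, g a b ≤ A.card * (n - B.card) := by
    calc _ ≤ ∑ a ∈ A, ∑ b ∈ Bᶜ, (1 : ℝ) :=
          Finset.sum_le_sum fun a _ => Finset.sum_le_sum fun b _ => h1 a b
      _ = _ := by simp only [Finset.sum_const, nsmul_eq_mul, hcB]; ring
  have e5 : ∑ a ∈ Aᶜ, ∑ b, g a b = ∑ a ∈ Aᶜ ∩ B, ∑ b, g a b + ∑ a ∈ Aᶜ \ B, ∑ b, g a b :=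
    (Finset.sum_inter_add_sum_sdiff _ _ _).symm
  have e6 : M = ∑ a ∈ Aᶜ ∩ B, ∑ b, g a b + ∑ a ∈ A ∩ B, ∑ b, g a b := by
    rw [hM, ← Finset.sum_inter_add_sum_sdiff B A, add_comm, Finset.inter_comm B A]
    congr 2
    ext; simp [and_comm]
  have e7 : (A ∩ B).card * (3 / 8 * n) ≤ ∑ a ∈ A ∩ B, ∑ b, g a b := by
    rw [← nsmul_eq_mul]
    exact Finset.card_nsmul_le_sum _ _ _ fun a ha => (hA a).1 (Finset.mem_inter.1 ha).1
  have e8 : ∑ a ∈ Aᶜ \ B, ∑ b, g a b ≤ (Aᶜ \ B).card * (3 / 8 * n) := by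
    rw [← nsmul_eq_mul]
    refine Finset.sum_le_card_nsmul _ _ _ fun a ha => ?_
    have : a ∉ A := by simp at ha; exact ha.1
    rw [hA] at this
    linarith
  have e9 : ((Aᶜ \ B).card : ℝ) = n - A.card - B.card + (A ∩ B).card := by
    have h : Aᶜ \ B = (A ∪ B)ᶜ := by ext; simp
    have h2 := Finset.card_union_add_card_inter A B
    have h2' : ((A ∪ B).card : ℝ) + (A ∩ B).card = A.card + B.card := by exact_mod_cast h2
    rw [h, Finset.card_compl, Nat.cast_sub (Finset.card_le_univ _), ← hn]
    linarith
  rw [e9] at e8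
  have hM0 : 0 ≤ ∑ a ∈ A ∩ B, ∑ b, g a b := Finset.sum_nonneg fun a _ => d0 a
  have hM1 : 0 ≤ ∑ a ∈ Aᶜ ∩ B, ∑ b, g a b := Finset.sum_nonneg fun a _ => d0 a
  have hab : (A.card : ℝ) ≤ B.card := by exact_mod_cast hAB
  have ha0 : (0 : ℝ) ≤ A.card := by positivity
  have key : (A.card : ℝ) * (n - B.card) + (n - A.card - B.card) * (3 / 8 * n)
      ≤ 25 / 64 * n ^ 2 := by
    nlinarith [sq_nonneg ((A.card : ℝ) - n / 8), mul_nonneg ha0 (sub_nonneg.2 hab),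
      mul_nonneg hn0 (sub_nonneg.2 hab)]
  nlinarith

lemma aux_main (h : V → V → V → ℝ) (h1 : ∀ a b c, h a b c ≤ 1)
    (h0 : ∀ a b c, 0 ≤ h a b c) (h01 : ∀ a b c, h a b c = 0 ∨ h a b c = 1)
    (hs : ∀ a b c, h a b c = h a c b) (hr : ∀ a b c, h a b c = h b a c)
    (γ : ℝ) (hγ : 0 < γ) (n : ℝ) (hn : n = Fintype.card V)
    (hd : ∀ v, (25 / 64 + 5 / 4 * γ) * n ^ 2 ≤ ∑ a, ∑ b, h v a b) (x y : V)
    (hxy : (Finset.univ.filter (fun w => 3 / 8 * n ≤ ∑ b, h x w b)).card ≤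
      (Finset.univ.filter (fun w => 3 / 8 * n ≤ ∑ b, h y w b)).card) :
    25 / 96 * γ ^ 2 * (9 / 128) ^ 2 * n ^ 7 ≤
      ∑ w, ∑ p, ∑ q, h w p q * (∑ a, h x w a * ∑ c, h p a c) * (∑ b, h y w b * ∑ c, h q b c) := by
  have hn0 : 0 ≤ n := by rw [hn]; positivity
  set A := Finset.univ.filter (fun w => 3 / 8 * n ≤ ∑ b, h x w b) with hA
  set B := Finset.univ.filter (fun w => 3 / 8 * n ≤ ∑ b, h y w b) with hB
  have k0 : ∀ a b, 0 ≤ ∑ c, h a b c := fun a b => Finset.sum_nonneg fun c _ => h0 a b c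
  have P0 : ∀ z w q, 0 ≤ ∑ b, h z w b * ∑ c, h q b c := fun z w q =>
    Finset.sum_nonneg fun b _ => mul_nonneg (h0 _ _ _) (k0 _ _)
  have hM := aux_M (h x) (h1 x) (hs x) (h0 x) n hn A B (by simp [hA]) hxy
  have hM' : 5 / 12 * γ * n ^ 2 ≤ ∑ a ∈ B, ∑ b, h x a b := by
    have := hd x
    linarith
  have hP : ∀ w ∈ B, ∀ q, 5 / 8 * γ * n ^ 2 ≤ ∑ b, h y w b * ∑ c, h q b c := by
    intro w hw q
    have hw' : 3 / 8 * n ≤ ∑ b, h y w b := by simpa [hB] using hw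
    set S := Finset.univ.filter (fun b => h y w b = 1) with hS
    have hi : ∀ b, h y w b = if h y w b = 1 then 1 else 0 := by
      intro b
      rcases h01 y w b with e | e <;> simp [e]
    have hcard : ∑ b, h y w b = S.card := by
      rw [Finset.sum_congr rfl fun b _ => hi b, Finset.sum_boole]
    have hsum : ∑ b, h y w b * ∑ c, h q b c = ∑ b ∈ S, ∑ c, h q b c := by
      rw [hS, Finset.sum_filter]
      refine Finset.sum_congr rfl fun b _ => ?_
      rcases h01 y w b with e | e <;> simp [e]
    have t := aux_touch (h q) (h1 q) (hs q) (h0 q) S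
    have hSn : (S.card : ℝ) ≤ n := by rw [hn]; exact_mod_cast Finset.card_le_univ S
    rw [hsum]
    rw [hcard] at hw'
    rw [← hn] at t
    have := hd q
    nlinarith
  have hR : ∀ w a, (9 / 128) ^ 2 * n ^ 3 ≤ ∑ p, (∑ q, h w p q) * ∑ c, h a p c := by
    intro w a
    have hh : ∀ v, 25 / 64 * n ^ 2 ≤ ∑ a, ∑ b, h v a b := fun v => by
      have := hd v
      have : 0 ≤ γ * n ^ 2 := by positivity
      linarith
    exact aux_R (h w) (h a) (h1 w) (hs w) (h0 w) (h1 a) (hs a) (h0 a) n hn (hh w) (hh a)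
  have step : ∀ w ∈ B, (5 / 8 * γ * n ^ 2) * ((9 / 128) ^ 2 * n ^ 3) * (∑ b, h x w b) ≤
      ∑ p, ∑ q, h w p q * (∑ a, h x w a * ∑ c, h p a c) * (∑ b, h y w b * ∑ c, h q b c) := by
    intro w hw
    calc _ = (5 / 8 * γ * n ^ 2) * ∑ a, h x w a * ((9 / 128) ^ 2 * n ^ 3) := by
          rw [← Finset.sum_mul]; ring
      _ ≤ (5 / 8 * γ * n ^ 2) * ∑ a, h x w a * ∑ p, (∑ q, h w p q) * ∑ c, h a p c := by
          refine mul_le_mul_of_nonneg_left (Finset.sum_le_sum fun a _ => ?_) (by positivity)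
          exact mul_le_mul_of_nonneg_left (hR w a) (h0 _ _ _)
      _ = ∑ p, ∑ q, h w p q * (∑ a, h x w a * ∑ c, h p a c) * (5 / 8 * γ * n ^ 2) := by
          have : ∑ a, h x w a * ∑ p, (∑ q, h w p q) * ∑ c, h a p c =
              ∑ p, ∑ q, h w p q * (∑ a, h x w a * ∑ c, h p a c) := by
            simp_rw [← Finset.sum_mul, Finset.mul_sum (s := Finset.univ) (f := fun p => (∑ q, h w p q) * ∑ c, h _ p c)]
            rw [Finset.sum_comm]
            refine Finset.sum_congr rfl fun p _ => ?_
            rw [Finset.mul_sum]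
            refine Finset.sum_congr rfl fun a _ => ?_
            rw [Finset.sum_congr rfl fun c _ => hr a p c]
            ring
          rw [this]
          simp_rw [← Finset.sum_mul]
          ring
      _ ≤ _ := by
          refine Finset.sum_le_sum fun p _ => Finset.sum_le_sum fun q _ => ?_
          exact mul_le_mul_of_nonneg_left (hP w hw q) (mul_nonneg (h0 _ _ _) (P0 _ _ _))
  calc _ = (5 / 8 * γ * n ^ 2) * ((9 / 128) ^ 2 * n ^ 3) * (5 / 12 * γ * n ^ 2) := by ring
    _ ≤ (5 / 8 * γ * n ^ 2) * ((9 / 128) ^ 2 * n ^ 3) * ∑ w ∈ B, ∑ b, h x w b :=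
      mul_le_mul_of_nonneg_left hM' (by positivity)
    _ = ∑ w ∈ B, (5 / 8 * γ * n ^ 2) * ((9 / 128) ^ 2 * n ^ 3) * ∑ b, h x w b := by
      rw [Finset.mul_sum]
    _ ≤ _ := Finset.sum_le_sum step
    _ ≤ _ := Finset.sum_le_sum_of_subset_of_nonneg (Finset.subset_univ _) fun w _ _ =>
      Finset.sum_nonneg fun p _ => Finset.sum_nonneg fun q _ =>
        mul_nonneg (mul_nonneg (h0 _ _ _) (P0 _ _ _)) (P0 _ _ _)

lemma aux_deg (H : Finset (Finset V)) (h3 : ∀ e ∈ H, e.card = 3) (v : V) :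
    2 * ((H.filter (fun e => v ∈ e)).card : ℝ) ≤
      ∑ a, ∑ b, if ({v, a, b} : Finset V) ∈ H then (1 : ℝ) else 0 := by
  rw [← Fintype.sum_prod_type' (f := fun a b => if ({v, a, b} : Finset V) ∈ H then (1 : ℝ) else 0),
    Finset.sum_boole]
  have hm : ∀ p ∈ Finset.univ.filter (fun p : V × V => ({v, p.1, p.2} : Finset V) ∈ H),
      ({v, p.1, p.2} : Finset V) ∈ H.filter (fun e => v ∈ e) := by
    intro p hp
    simp at hp ⊢
    exact hp
  have := Finset.card_eq_sum_card_fiberwise hm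
  rw [this]
  have h2 : (H.filter (fun e => v ∈ e)).card • 2 ≤ _ :=
    Finset.card_nsmul_le_sum (H.filter (fun e => v ∈ e))
      (fun e => ((Finset.univ.filter (fun p : V × V => ({v, p.1, p.2} : Finset V) ∈ H)).filter
        (fun p => ({v, p.1, p.2} : Finset V) = e)).card) 2 (by
      intro e he
      simp only [Finset.mem_filter] at he
      have hc := h3 e he.1
      have hc2 : (e.erase v).card = 2 := by rw [Finset.card_erase_of_mem he.2, hc]
      obtain ⟨a, b, hab, hE⟩ := Finset.card_eq_two.1 hc2
      have hev : ({v, a, b} : Finset V) = e := by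
        rw [← Finset.insert_erase he.2, hE]
      have hev' : ({v, b, a} : Finset V) = e := by
        rw [Finset.pair_comm b a, hev]
      rw [← Finset.card_pair (a := (a, b)) (b := (b, a)) (by simp; intro h; exact absurd h hab)]
      refine Finset.card_le_card ?_
      intro p hp
      simp only [Finset.mem_insert, Finset.mem_singleton] at hp
      rcases hp with rfl | rfl <;> simp [hev, hev', he.1])
  have h2' : (((H.filter (fun e => v ∈ e)).card • 2 : ℕ) : ℝ) ≤ _ := Nat.cast_le.2 h2
  rw [smul_eq_mul, Nat.cast_mul] at h2'
  push_cast at h2' ⊢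
  linarith

def auxEquiv (V : Type) : (V × V × V × V × V × V × V) ≃ (Fin 7 → V) where
  toFun p := ![p.2.2.2.2.2.1, p.2.2.2.1, p.2.1, p.1, p.2.2.1, p.2.2.2.2.1, p.2.2.2.2.2.2]
  invFun v := (v 3, v 2, v 4, v 1, v 5, v 0, v 6)
  left_inv p := rfl
  right_inv v := by ext i; fin_cases i <;> rfl

end Aux

section Aux2
variable {V : Type} [Fintype V] [DecidableEq V]

lemma aux_sum (h : V → V → V → ℝ) (x y : V) :
    ∑ w, ∑ p, ∑ q, h w p q * (∑ a, h x w a * ∑ c, h p a c) * (∑ b, h y w b * ∑ c, h q b c) =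
    ∑ v : Fin 7 → V, h (v 3) (v 2) (v 4) * (h x (v 3) (v 1) * h (v 2) (v 1) (v 0)) *
      (h y (v 3) (v 5) * h (v 4) (v 5) (v 6)) := by
  rw [← Equiv.sum_comp (auxEquiv V)]
  simp only [Fintype.sum_prod_type]
  refine Finset.sum_congr rfl fun w _ => Finset.sum_congr rfl fun p _ =>
    Finset.sum_congr rfl fun q _ => ?_
  have e : ∀ a b c d, auxEquiv V (w, p, q, a, b, c, d) = ![c, a, p, w, q, b, d] :=
    fun a b c d => rfl
  rw [mul_assoc, Finset.sum_mul_sum, Finset.mul_sum]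
  refine Finset.sum_congr rfl fun a _ => ?_
  rw [Finset.mul_sum]
  refine Finset.sum_congr rfl fun b _ => ?_
  rw [Finset.mul_sum, Finset.mul_sum, Finset.sum_mul_sum, Finset.mul_sum]
  refine Finset.sum_congr rfl fun c _ => ?_
  rw [Finset.mul_sum]
  refine Finset.sum_congr rfl fun d _ => ?_
  rw [e]
  change _ = h w p q * (h x w a * h p a c) * (h y w b * h q b d)
  ring

lemma aux_inj (hn6 : 6 ≤ Fintype.card V) :
    (Fintype.card V : ℝ) ^ 7 - 42 * (Fintype.card V : ℝ) ^ 6 ≤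
      ({v : Fin 7 → V | Function.Injective v}.ncard : ℝ) := by
  classical
  have hc : {v : Fin 7 → V | Function.Injective v}.ncard = (Fintype.card V).descFactorial 7 := by
    rw [← Nat.card_coe_set_eq]
    have : Nat.card {v : Fin 7 → V | Function.Injective v} = Nat.card (Fin 7 ↪ V) :=
      Nat.card_congr (Equiv.subtypeInjectiveEquivEmbedding (Fin 7) V)
    rw [this, Nat.card_eq_fintype_card, Fintype.card_embedding_eq, Fintype.card_fin]
  rw [hc]
  set m := Fintype.card V
  have h := Nat.pow_sub_le_descFactorial m 7
  have h' : ((m : ℝ) - 6) ^ 7 ≤ (m.descFactorial 7 : ℝ) := by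
    have e : ((m + 1 - 7 : ℕ) : ℝ) = (m : ℝ) - 6 := by
      rw [Nat.cast_sub (by omega)]; push_cast; ring
    rw [← e]
    exact_mod_cast h
  refine le_trans ?_ h'
  have hm : (0 : ℝ) < m := by
    have : 0 < m := by omega
    exact_mod_cast this
  have hm6 : (6 : ℝ) ≤ m := by exact_mod_cast hn6
  have hb := one_add_mul_le_pow (a := -6 / (m : ℝ)) (by
    rw [neg_div, neg_le_neg_iff, div_le_iff₀ hm]; linarith) 7
  have : ((m : ℝ) - 6) ^ 7 = (m : ℝ) ^ 7 * (1 + -6 / (m : ℝ)) ^ 7 := by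
    rw [← mul_pow]; congr 1; field_simp; ring
  rw [this]
  calc _ = (m : ℝ) ^ 7 * (1 + ((7 : ℕ) : ℝ) * (-6 / (m : ℝ))) := by
        push_cast; field_simp; ring
    _ ≤ _ := mul_le_mul_of_nonneg_left hb (by positivity)

end Aux2

theorem counting_absorbing_tuples (γ : ℝ) (hγ0 : 0 < γ) (hγ1 : γ < 3 / 8) :
    ∃ n₀ : ℕ, ∀ (V : Type) [Fintype V] [DecidableEq V], ∀ (H : Finset (Finset V)) (n : ℕ),
      Fintype.card V = n → n₀ < n →
      (∀ e ∈ H, e.card = 3) →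
      (∀ v : V, (5 / 8 + γ) ^ 2 * (n.choose 2 : ℝ) ≤
        ((H.filter (fun e => v ∈ e)).card : ℝ)) →
      ∀ x y : V,
        (γ * n) ^ 7 / 8 ≤ (({v : Fin 7 → V | AbsorbsPair H v x y}).ncard : ℝ) := by
  obtain ⟨N, hN⟩ := exists_nat_gt (140000 / γ ^ 2)
  refine ⟨N + 6, ?_⟩
  intro V _ _ H n hcard hn h3 hdeg x y
  classical
  have hg2 : 0 < γ ^ 2 := by positivity
  have hnN : 140000 < γ ^ 2 * (n : ℝ) := by
    have h1 : (N : ℝ) ≤ n := by exact_mod_cast (by omega : N ≤ n)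
    have h2 := (div_lt_iff₀ hg2).1 (lt_of_lt_of_le hN h1)
    linarith
  have hnpos : (0 : ℝ) < n := by exact_mod_cast (by omega : 0 < n)
  have hcardR : (n : ℝ) = Fintype.card V := by rw [hcard]
  set h : V → V → V → ℝ := fun a b c => if ({a, b, c} : Finset V) ∈ H then 1 else 0 with hh
  have h01 : ∀ a b c, h a b c = 0 ∨ h a b c = 1 := by
    intro a b c; simp only [hh]; split_ifs <;> simp
  have h0 : ∀ a b c, 0 ≤ h a b c := fun a b c => by rcases h01 a b c with e | e <;> simp [e]
  have h1 : ∀ a b c, h a b c ≤ 1 := fun a b c => by rcases h01 a b c with e | e <;> simp [e]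
  have hs : ∀ a b c, h a b c = h a c b := fun a b c => by
    simp only [hh]; rw [Finset.pair_comm]
  have hr : ∀ a b c, h a b c = h b a c := fun a b c => by
    simp only [hh]; rw [Finset.insert_comm]
  have hd : ∀ v, (25 / 64 + 5 / 4 * γ) * (n : ℝ) ^ 2 ≤ ∑ a, ∑ b, h v a b := by
    intro v
    refine le_trans ?_ (aux_deg H h3 v)
    have := hdeg v
    rw [Nat.cast_choose_two] at this
    have hD : (5 / 8 + γ) ^ 2 ≤ 1 := by nlinarith
    have : (5 / 8 + γ) ^ 2 * (n : ℝ) ≤ γ ^ 2 * n * n := by nlinarith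
    nlinarith
  have main : 25 / 96 * γ ^ 2 * (9 / 128) ^ 2 * (n : ℝ) ^ 7 ≤
      ∑ v : Fin 7 → V, h (v 3) (v 2) (v 4) * (h x (v 3) (v 1) * h (v 2) (v 1) (v 0)) *
      (h y (v 3) (v 5) * h (v 4) (v 5) (v 6)) := by
    rw [← aux_sum]
    rcases le_total (Finset.univ.filter (fun w => 3 / 8 * (n : ℝ) ≤ ∑ b, h x w b)).card
      (Finset.univ.filter (fun w => 3 / 8 * (n : ℝ) ≤ ∑ b, h y w b)).card with hl | hl
    · exact aux_main h h1 h0 h01 hs hr γ hγ0 n hcardR hd x y hl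
    · refine le_trans (aux_main h h1 h0 h01 hs hr γ hγ0 n hcardR hd y x hl) (le_of_eq ?_)
      refine Finset.sum_congr rfl fun w _ => ?_
      rw [Finset.sum_comm]
      refine Finset.sum_congr rfl fun p _ => Finset.sum_congr rfl fun q _ => ?_
      rw [hs w q p]
      ring
  set G : Set (Fin 7 → V) := {v | ({v 0, v 1, v 2} : Finset V) ∈ H ∧
    ({v 2, v 3, v 4} : Finset V) ∈ H ∧ ({v 4, v 5, v 6} : Finset V) ∈ H ∧
    ({v 1, x, v 3} : Finset V) ∈ H ∧ ({v 3, y, v 5} : Finset V) ∈ H} with hG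
  have hGcard : ∑ v : Fin 7 → V, h (v 3) (v 2) (v 4) * (h x (v 3) (v 1) * h (v 2) (v 1) (v 0)) *
      (h y (v 3) (v 5) * h (v 4) (v 5) (v 6)) = (G.ncard : ℝ) := by
    rw [Set.ncard_eq_toFinset_card', ← Finset.filter_mem_eq_inter (s := Finset.univ) (t := G.toFinset) |>.trans (Finset.univ_inter _),
      ← Finset.sum_boole]
    refine Finset.sum_congr rfl fun v _ => ?_
    have e1 : ({v 0, v 1, v 2} : Finset V) = {v 2, v 1, v 0} := by ext; simp; tauto
    have e2 : ({v 2, v 3, v 4} : Finset V) = {v 3, v 2, v 4} := by ext; simp; tauto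
    have e3 : ({v 1, x, v 3} : Finset V) = {x, v 3, v 1} := by ext; simp; tauto
    have e4 : ({v 3, y, v 5} : Finset V) = {y, v 3, v 5} := by ext; simp; tauto
    simp only [hG, Set.mem_toFinset, Set.mem_setOf_eq, e1, e2, e3, e4, hh]
    simp only [← ite_and, mul_ite, mul_one, mul_zero]
    refine if_congr ?_ rfl rfl
    tauto
  rw [hGcard] at main
  have hI := aux_inj (V := V) (by omega)
  set I : Set (Fin 7 → V) := {v | Function.Injective v} with hIdef
  have hset : {v : Fin 7 → V | AbsorbsPair H v x y} = I ∩ G := by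
    ext v; rfl
  rw [hset]
  have hu := Set.ncard_union_add_ncard_inter I G
  have hU : (I ∪ G).ncard ≤ n ^ 7 := by
    refine (Set.ncard_le_card (I ∪ G)).trans ?_
    simp [hcard]
  have hu' : ((I ∪ G).ncard : ℝ) + (I ∩ G).ncard = I.ncard + G.ncard := by exact_mod_cast hu
  have hU' : ((I ∪ G).ncard : ℝ) ≤ (n : ℝ) ^ 7 := by exact_mod_cast hU
  rw [← hcardR] at hI
  have hγ5 : γ ^ 5 ≤ (3 / 8) ^ 5 := pow_le_pow_left₀ hγ0.le hγ1.le 5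
  have hn7 : γ ^ 2 * (n : ℝ) ^ 7 * γ ^ 5 ≤ γ ^ 2 * (n : ℝ) ^ 7 * (3 / 8) ^ 5 :=
    mul_le_mul_of_nonneg_left hγ5 (by positivity)
  have hn6 : 140000 * (n : ℝ) ^ 6 ≤ γ ^ 2 * n * (n : ℝ) ^ 6 :=
    mul_le_mul_of_nonneg_right hnN.le (by positivity)
  have e7 : (γ * (n : ℝ)) ^ 7 = γ ^ 2 * (n : ℝ) ^ 7 * γ ^ 5 := by ring
  have e7' : γ ^ 2 * n * (n : ℝ) ^ 6 = γ ^ 2 * (n : ℝ) ^ 7 := by ring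
  rw [e7]
  rw [e7'] at hn6
  have e8 : 25 / 96 * γ ^ 2 * (9 / 128) ^ 2 * (n : ℝ) ^ 7 =
    25 / 96 * (9 / 128) ^ 2 * (γ ^ 2 * (n : ℝ) ^ 7) := by ring
  rw [e8] at main
  linarith
end

section
/- Let γ ∈ (0, 3/8) and let H=(V,E) be a 3-uniform hypergraph on n ≥ 168/γ⁷ vertices with δ₁(H) ≥ (5/8 + γ)²·C(n,2). Then for every pair of vertices x, y ∈ V there exists a set D ⊆ V of size |D| = ⌈γn⌉ such that one of the following holds: either deg(x,d) ≥ γn and deg(y,d) ≥ (3/8)n for all d ∈ D, or deg(y,d) ≥ γn and deg(x,d) ≥ (3/8)n for all d ∈ D. -/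
open Finset

/-- The number of edges of `H` containing both `u` and `v`. -/
def pairDeg {V : Type} [DecidableEq V] (H : Finset (Finset V)) (u v : V) : ℕ :=
  (H.filter (fun e => u ∈ e ∧ v ∈ e)).card

theorem aux_final (γ N a b S : ℝ) (h0 : 0 < γ) (h1 : γ < 3 / 8) (hN : 168 ≤ N)
    (hγN : 168 ≤ γ * N) (hb0 : 0 ≤ b) (hab : a ≤ b) (hlt : a + b < (1 + γ) * N)
    (hS : (5 / 8 + γ) ^ 2 * (N * (N - 1)) ≤ S)
    (hS1 : S ≤ a * b + (b - a) * (3 / 8 * N) + 2 * (γ * N * (N - b)))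
    (hS2 : S ≤ b * b + 2 * (γ * N * (N - b))) : False := by
  have hp : (5 / 8 + γ) ^ 2 ≤ 1 := by nlinarith
  have hpN : (5 / 8 + γ) ^ 2 * N ≤ N := by nlinarith
  have hS' : (5 / 8 + γ) ^ 2 * N ^ 2 ≤ S + N := by nlinarith
  rcases le_total (3 / 8 * N) b with hb | hb
  · have h2 : a * (b - 3 / 8 * N) ≤ ((1 + γ) * N - b) * (b - 3 / 8 * N) :=
      mul_le_mul_of_nonneg_right (by linarith) (by linarith)
    have h3 : S ≤ N ^ 2 * (25 / 64 + 3 / 4 * γ + γ ^ 2 / 4) := by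
      nlinarith [sq_nonneg (b - 7 / 8 * N + γ * N / 2)]
    have h4 : (γ * N) * N ≥ 168 * N := mul_le_mul_of_nonneg_right hγN (by linarith)
    nlinarith [sq_nonneg (γ * N)]
  · have h2 : b * b ≤ (3 / 8 * N) * b := mul_le_mul_of_nonneg_right hb hb0
    have h4 : N * N ≥ 168 * N := mul_le_mul_of_nonneg_right hN (by linarith)
    have h5 : 0 ≤ γ * N * b := by positivity
    have h6 : (3 / 8 - γ) ^ 2 * N ^ 2 ≥ 0 := by positivity
    rcases le_total (2 * γ) (3 / 8) with h | h
    · have h7 : (3 / 8 - 2 * γ) * N * b ≤ (3 / 8 - 2 * γ) * N * (3 / 8 * N) :=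
        mul_le_mul_of_nonneg_left hb (mul_nonneg (by linarith) (by linarith))
      nlinarith [sq_nonneg (γ * N)]
    · have h7 : 0 ≤ (2 * γ - 3 / 8) * N * b :=
        mul_nonneg (mul_nonneg (by linarith) (by linarith)) hb0
      nlinarith

theorem aux_graph {V : Type} [Fintype V] [DecidableEq V] (γ : ℝ) (h0 : 0 < γ) (h1 : γ < 3 / 8)
    (R : V → V → Prop) [∀ v, DecidablePred (R v)] (hsym : ∀ v w, R v w → R w v)
    (N : ℝ) (hNV : (Fintype.card V : ℝ) = N) (hN : 168 ≤ N) (hγN : 168 ≤ γ * N)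
    (hS : (5 / 8 + γ) ^ 2 * (N * (N - 1)) ≤ ∑ v, ((univ.filter (R v)).card : ℝ)) :
    (1 + γ) * N ≤ ((univ.filter (fun v => 3 / 8 * N ≤ ((univ.filter (R v)).card : ℝ))).card : ℝ)
      + ((univ.filter (fun v => γ * N ≤ ((univ.filter (R v)).card : ℝ))).card : ℝ) := by
  by_contra! hlt
  set d : V → ℝ := fun v => ((univ.filter (R v)).card : ℝ) with hd
  set A := univ.filter (fun v => 3 / 8 * N ≤ d v) with hA
  set B := univ.filter (fun v => γ * N ≤ d v) with hB
  have hAB : A ⊆ B := by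
    intro v hv
    simp only [hA, hB, mem_filter, mem_univ, true_and] at hv ⊢
    nlinarith
  have hcAB : (A.card : ℝ) ≤ B.card := by exact_mod_cast card_le_card hAB
  have hU : ∑ v ∈ Bᶜ, d v ≤ γ * N * (N - B.card) := by
    have : ∑ v ∈ Bᶜ, d v ≤ ∑ v ∈ Bᶜ, γ * N := by
      apply sum_le_sum
      intro v hv
      simp only [hB, mem_compl, mem_filter, mem_univ, true_and, not_le] at hv
      exact hv.le
    rw [sum_const, nsmul_eq_mul, card_compl, Nat.cast_sub (card_le_univ B), hNV] at this
    linarith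
  have key : ∀ C : Finset V, ∑ v ∈ C, d v ≤ C.card * B.card + ∑ v ∈ Bᶜ, d v := by
    intro C
    have e1 : ∀ v, d v ≤ B.card + ((Bᶜ.filter (R v)).card : ℝ) := by
      intro v
      have : (univ.filter (R v)).card ≤ B.card + (Bᶜ.filter (R v)).card := by
        refine le_trans (card_le_card ?_) (card_union_le _ _)
        intro w hw
        simp only [mem_filter, mem_univ, true_and] at hw
        by_cases h : w ∈ B <;> simp [h, hw]
      simp only [hd]
      exact_mod_cast this
    have e2 : ∑ v ∈ C, ((Bᶜ.filter (R v)).card : ℝ) ≤ ∑ v ∈ Bᶜ, d v := by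
      have e3 : ∑ v ∈ C, (Bᶜ.filter (R v)).card = ∑ w ∈ Bᶜ, (C.filter (fun v => R v w)).card := by
        simp only [card_filter]
        exact sum_comm
      have e4 : ∑ w ∈ Bᶜ, (C.filter (fun v => R v w)).card ≤ ∑ w ∈ Bᶜ, (univ.filter (R w)).card := by
        apply sum_le_sum
        intro w _
        apply card_le_card
        intro v hv
        simp only [mem_filter, mem_univ, true_and] at hv ⊢
        exact hsym _ _ hv.2
      rw [← e3] at e4
      simp only [hd]
      exact_mod_cast e4
    calc ∑ v ∈ C, d v ≤ ∑ v ∈ C, (B.card + ((Bᶜ.filter (R v)).card : ℝ)) :=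
          sum_le_sum (fun v _ => e1 v)
      _ = C.card * B.card + ∑ v ∈ C, ((Bᶜ.filter (R v)).card : ℝ) := by
          rw [sum_add_distrib, sum_const, nsmul_eq_mul]
      _ ≤ _ := by linarith
  have hsplit : ∑ v, d v = ∑ v ∈ B, d v + ∑ v ∈ Bᶜ, d v := (sum_add_sum_compl B d).symm
  have hsplit2 : ∑ v ∈ B, d v = ∑ v ∈ B \ A, d v + ∑ v ∈ A, d v := (sum_sdiff hAB).symm
  have hmid : ∑ v ∈ B \ A, d v ≤ (B.card - A.card) * (3 / 8 * N) := by
    have : ∑ v ∈ B \ A, d v ≤ ∑ v ∈ B \ A, 3 / 8 * N := by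
      apply sum_le_sum
      intro v hv
      simp only [hA, mem_sdiff, mem_filter, mem_univ, true_and, not_le] at hv
      exact hv.2.le
    rw [sum_const, nsmul_eq_mul, card_sdiff_of_subset hAB, Nat.cast_sub (card_le_card hAB)] at this
    linarith
  have kA := key A
  have kB := key B
  refine aux_final γ N A.card B.card (∑ v, d v) h0 h1 hN hγN (by positivity) hcAB hlt hS ?_ ?_
  · linarith
  · linarith

def lnk {V : Type} [DecidableEq V] (H : Finset (Finset V)) (x v w : V) : Prop :=
  v ≠ x ∧ w ≠ x ∧ v ≠ w ∧ ({x, v, w} : Finset V) ∈ H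

instance {V : Type} [DecidableEq V] (H : Finset (Finset V)) (x v : V) :
    DecidablePred (lnk H x v) := fun w => by unfold lnk; infer_instance

theorem lnk_le {V : Type} [Fintype V] [DecidableEq V] (H : Finset (Finset V)) (x v : V) :
    (univ.filter (lnk H x v)).card ≤ pairDeg H x v := by
  unfold pairDeg
  apply card_le_card_of_injOn (fun w => ({x, v, w} : Finset V))
  · intro w hw
    simp only [lnk, coe_filter, mem_univ, true_and, Set.mem_setOf_eq] at hw ⊢
    simp [hw.2.2.2]
  · intro w hw w' hw' h
    simp only [lnk, coe_filter, mem_univ, true_and, Set.mem_setOf_eq] at hw hw'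
    have : w ∈ ({x, v, w'} : Finset V) := by
      have h' : ({x, v, w} : Finset V) = {x, v, w'} := h
      rw [← h']; simp
    simp only [mem_insert, mem_singleton] at this
    rcases this with h | h | h
    · exact absurd h hw.2.1
    · exact absurd h.symm hw.2.2.1
    · exact h

theorem lnk_ge {V : Type} [Fintype V] [DecidableEq V] (H : Finset (Finset V))
    (hu : ∀ e ∈ H, e.card = 3) (x v : V) (hv : v ≠ x) :
    pairDeg H x v ≤ (univ.filter (lnk H x v)).card := by
  unfold pairDeg
  refine le_trans (card_le_card ?_)
    (card_image_le (s := univ.filter (lnk H x v)) (f := fun w => ({x, v, w} : Finset V)))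
  intro e he
  simp only [mem_filter] at he
  obtain ⟨heH, hx, hve⟩ := he
  have h1 : ((e.erase x).erase v).card = 1 := by
    rw [card_erase_of_mem (by simp [hv, hve]), card_erase_of_mem hx, hu e heH]
  obtain ⟨w, hw⟩ := card_eq_one.1 h1
  have hw' : w ∈ (e.erase x).erase v := by rw [hw]; simp
  simp only [mem_erase] at hw'
  have he : ({x, v, w} : Finset V) = e := by
    rw [← hw, insert_erase (by simp [hv, hve]), insert_erase hx]
  simp only [mem_image, mem_filter, mem_univ, true_and]
  exact ⟨w, ⟨hv, hw'.2.1, fun h => hw'.1 h.symm, by rw [he]; exact heH⟩, he⟩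

theorem lnk_sum {V : Type} [Fintype V] [DecidableEq V] (H : Finset (Finset V))
    (hu : ∀ e ∈ H, e.card = 3) (x : V) :
    2 * (H.filter (fun e => x ∈ e)).card ≤ ∑ v, (univ.filter (lnk H x v)).card := by
  have h1 : ∑ v ∈ univ.erase x, pairDeg H x v = 2 * (H.filter (fun e => x ∈ e)).card := by
    have : ∀ v, pairDeg H x v = ((H.filter (fun e => x ∈ e)).filter (fun e => v ∈ e)).card := by
      intro v; rw [filter_filter]; rfl
    simp only [this]
    have hK : ∀ e ∈ H.filter (fun e => x ∈ e), x ∈ e ∧ e.card = 3 := by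
      intro e he
      simp only [mem_filter] at he
      exact ⟨he.2, hu e he.1⟩
    generalize H.filter (fun e => x ∈ e) = K at hK
    simp only [card_filter]
    rw [sum_comm, mul_comm, ← smul_eq_mul, ← sum_const]
    apply sum_congr rfl
    intro e he
    rw [← card_filter]
    have : (univ.erase x).filter (fun v => v ∈ e) = e.erase x := by
      ext v; simp
    rw [this, card_erase_of_mem (hK e he).1, (hK e he).2]
  rw [← h1]
  calc _ ≤ ∑ v ∈ univ.erase x, (univ.filter (lnk H x v)).card :=
        sum_le_sum (fun v hv => lnk_ge H hu x v (by simpa using hv))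
    _ ≤ _ := sum_le_sum_of_subset (subset_univ _)

theorem claim_counting_D (γ : ℝ) (hγ0 : 0 < γ) (hγ1 : γ < 3 / 8)
    (V : Type) [Fintype V] [DecidableEq V] (H : Finset (Finset V)) (n : ℕ)
    (hcard : Fintype.card V = n) (hn : (168 : ℝ) / γ ^ 7 ≤ n)
    (huniform : ∀ e ∈ H, e.card = 3)
    (hdeg : ∀ v : V, (5 / 8 + γ) ^ 2 * (n.choose 2 : ℝ) ≤
      ((H.filter (fun e => v ∈ e)).card : ℝ)) :
    ∀ x y : V, ∃ D : Finset V, D.card = ⌈γ * (n : ℝ)⌉₊ ∧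
      ((∀ d ∈ D, γ * n ≤ (pairDeg H x d : ℝ) ∧ 3 / 8 * n ≤ (pairDeg H y d : ℝ)) ∨
       (∀ d ∈ D, γ * n ≤ (pairDeg H y d : ℝ) ∧ 3 / 8 * n ≤ (pairDeg H x d : ℝ))) := by
  intro x y
  have hγ7 : 168 ≤ (n : ℝ) * γ ^ 7 := (div_le_iff₀ (by positivity)).1 hn
  have hn0 : (0 : ℝ) ≤ n := Nat.cast_nonneg n
  have h6 : γ ^ 6 ≤ 1 := pow_le_one₀ hγ0.le (by linarith)
  have hγN : 168 ≤ γ * n := by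
    have : γ * n * γ ^ 6 ≤ γ * n * 1 := mul_le_mul_of_nonneg_left h6 (by positivity)
    nlinarith
  have hN : (168 : ℝ) ≤ n := by nlinarith
  have main : ∀ z : V, (1 + γ) * n ≤
      ((univ.filter (fun v => 3 / 8 * (n : ℝ) ≤ ((univ.filter (lnk H z v)).card : ℝ))).card : ℝ)
      + ((univ.filter (fun v => γ * (n : ℝ) ≤ ((univ.filter (lnk H z v)).card : ℝ))).card : ℝ) := by
    intro z
    apply aux_graph γ hγ0 hγ1 (lnk H z) ?_ n (by exact_mod_cast hcard) hN hγN
    · have h1 := hdeg z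
      have h2 : (2 : ℝ) * ((H.filter (fun e => z ∈ e)).card : ℝ) ≤
          ∑ v, ((univ.filter (lnk H z v)).card : ℝ) := by
        exact_mod_cast lnk_sum H huniform z
      rw [Nat.cast_choose_two] at h1
      linarith
    · rintro v w ⟨a, b, c, d⟩
      refine ⟨b, a, c.symm, ?_⟩
      rwa [pair_comm w v]
  have fin : ∀ P Q : Finset V, (1 + γ) * n ≤ (P.card : ℝ) + Q.card →
      ∃ D : Finset V, D.card = ⌈γ * (n : ℝ)⌉₊ ∧ D ⊆ P ∩ Q := by
    intro P Q h
    have h1 := card_union_add_card_inter P Q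
    have h2 : (P ∪ Q).card ≤ n := hcard ▸ card_le_univ _
    have h1' : ((P ∪ Q).card : ℝ) + (P ∩ Q).card = P.card + Q.card := by exact_mod_cast h1
    have h2' : ((P ∪ Q).card : ℝ) ≤ n := by exact_mod_cast h2
    have h3 : ⌈γ * (n : ℝ)⌉₊ ≤ (P ∩ Q).card := by
      rw [Nat.ceil_le]; linarith
    obtain ⟨D, hD, hc⟩ := exists_subset_card_eq h3
    exact ⟨D, hc, hD⟩
  have le : ∀ z v, ((univ.filter (lnk H z v)).card : ℝ) ≤ pairDeg H z v := by
    intro z v; exact_mod_cast lnk_le H z v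
  have mx := main x
  have my := main y
  by_cases h : (1 + γ) * n ≤
      ((univ.filter (fun v => 3 / 8 * (n : ℝ) ≤ ((univ.filter (lnk H y v)).card : ℝ))).card : ℝ)
      + ((univ.filter (fun v => γ * (n : ℝ) ≤ ((univ.filter (lnk H x v)).card : ℝ))).card : ℝ)
  · obtain ⟨D, hc, hD⟩ := fin _ _ h
    refine ⟨D, hc, Or.inl fun d hd => ?_⟩
    have := hD hd
    simp only [mem_inter, mem_filter, mem_univ, true_and] at this
    exact ⟨this.2.trans (le x d), this.1.trans (le y d)⟩
  · obtain ⟨D, hc, hD⟩ := fin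
      (univ.filter (fun v => 3 / 8 * (n : ℝ) ≤ ((univ.filter (lnk H x v)).card : ℝ)))
      (univ.filter (fun v => γ * (n : ℝ) ≤ ((univ.filter (lnk H y v)).card : ℝ))) (by linarith)
    refine ⟨D, hc, Or.inr fun d hd => ?_⟩
    have := hD hd
    simp only [mem_inter, mem_filter, mem_univ, true_and] at this
    exact ⟨this.2.trans (le y d), this.1.trans (le x d)⟩
end
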